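/- arXiv:2511.04314 — 2 statements merged into one kernel-verified Lean document; each statement's English description precedes it below -/
import Mathlib

section
/- There is no separable commutative complex Banach algebra B such that every separable commutative complex Banach algebra A admits a contractive homomorphic embedding into B; that is, for every separable commutative Banach algebra B there exists a separable commutative Banach algebra A such that no injective algebra homomorphism φ : A → B satisfies both ‖φ(a)‖ ≤ ‖a‖ for all a and the existence of c > 0 with c‖a‖ ≤ ‖φ(a)‖ for all a. -/
/-- A bundled separable commutative complex Banach algebra: a complete normed
(not necessarily unital) commutative ring which is a normed space over `ℂ`
whose multiplication is `ℂ`-bilinear, and whose underlying metric space is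
separable. -/
structure SepCommBanachAlgebra : Type 1 where
  carrier : Type
  [ring : NonUnitalNormedCommRing carrier]
  [normedSpace : NormedSpace ℂ carrier]
  [tower : IsScalarTower ℂ carrier carrier]
  [smulComm : SMulCommClass ℂ carrier carrier]
  [complete : CompleteSpace carrier]
  [separable : TopologicalSpace.SeparableSpace carrier]

attribute [instance] SepCommBanachAlgebra.ring SepCommBanachAlgebra.normedSpace
  SepCommBanachAlgebra.tower SepCommBanachAlgebra.smulComm
  SepCommBanachAlgebra.complete SepCommBanachAlgebra.separable


/-- the sign attached to a Boolean -/
def sgnB (b : Bool) : ℝ := if b then 1 else -1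

lemma sgnB_mul_self (b : Bool) : sgnB b * sgnB b = 1 := by
  cases b <;> simp [sgnB]

lemma sum_exp_signs {J : Type} [Fintype J] [DecidableEq J] (a : J → ℝ)
    (ha : ∀ j, |a j| ≤ 1) (θ : ℝ) :
    ∑ e : J → Bool, Real.exp (θ * ∑ j, sgnB (e j) * a j)
      ≤ 2 ^ (Fintype.card J) * Real.exp (θ ^ 2 * Fintype.card J / 2) := by
  have h1 : ∀ e : J → Bool, Real.exp (θ * ∑ j, sgnB (e j) * a j)
      = ∏ j, Real.exp (θ * (sgnB (e j) * a j)) := by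
    intro e
    rw [Finset.mul_sum, Real.exp_sum]
  simp_rw [h1]
  have h2 : ∑ e : J → Bool, ∏ j, Real.exp (θ * (sgnB (e j) * a j))
      = ∏ j, ∑ b : Bool, Real.exp (θ * (sgnB b * a j)) := by
    rw [Finset.prod_univ_sum, Fintype.piFinset_univ]
  rw [h2]
  have h3 : ∀ j, ∑ b : Bool, Real.exp (θ * (sgnB b * a j)) ≤ 2 * Real.exp (θ ^ 2 / 2) := by
    intro j
    have : ∑ b : Bool, Real.exp (θ * (sgnB b * a j)) = 2 * Real.cosh (θ * a j) := by
      rw [Real.cosh_eq]; simp [sgnB]; ring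
    rw [this]
    have h4 := Real.cosh_le_exp_half_sq (θ * a j)
    have h5 : Real.exp ((θ * a j) ^ 2 / 2) ≤ Real.exp (θ ^ 2 / 2) := by
      apply Real.exp_le_exp.mpr
      have : (a j) ^ 2 ≤ 1 := by
        rw [← sq_abs]; have := abs_nonneg (a j); nlinarith [ha j]
      rw [mul_pow]
      nlinarith [sq_nonneg θ]
    linarith
  calc ∏ j, ∑ b : Bool, Real.exp (θ * (sgnB b * a j))
      ≤ ∏ j : J, (2 * Real.exp (θ ^ 2 / 2)) := by
        apply Finset.prod_le_prod
        · intro j _; positivity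
        · intro j _; exact h3 j
    _ = _ := by
        rw [Finset.prod_const, Finset.card_univ, mul_pow, ← Real.exp_nat_mul]
        congr 2; ring

/-- Random signs: a union bound. -/
lemma exists_signs {J I : Type} [Fintype J] [DecidableEq J] [Fintype I]
    (a : I → J → ℝ) (ha : ∀ i j, |a i j| ≤ 1) (θ : ℝ) (hθ : 0 ≤ θ)
    (hc : 2 * (Fintype.card I : ℝ) < Real.exp (θ ^ 2 * Fintype.card J / 2)) :
    ∃ e : J → ℝ, (∀ j, e j * e j = 1) ∧
      ∀ i, |∑ j, e j * a i j| ≤ θ * Fintype.card J := by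
  by_contra hcon
  push Not at hcon
  set n : ℝ := (Fintype.card J : ℝ) with hn
  have key : ∀ e : J → Bool, Real.exp (θ ^ 2 * n) ≤
      ∑ i, (Real.exp (θ * ∑ j, sgnB (e j) * a i j) +
        Real.exp ((-θ) * ∑ j, sgnB (e j) * a i j)) := by
    intro e
    obtain ⟨i, hi⟩ := hcon (fun j => sgnB (e j)) (fun j => sgnB_mul_self _)
    refine le_trans ?_ (Finset.single_le_sum (f := fun i =>
      (Real.exp (θ * ∑ j, sgnB (e j) * a i j) +
        Real.exp ((-θ) * ∑ j, sgnB (e j) * a i j))) (fun i _ => by positivity)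
        (Finset.mem_univ i))
    rcases lt_abs.mp hi with h | h
    · have : Real.exp (θ ^ 2 * n) ≤ Real.exp (θ * ∑ j, sgnB (e j) * a i j) := by
        apply Real.exp_le_exp.mpr; nlinarith
      have := Real.exp_pos ((-θ) * ∑ j, sgnB (e j) * a i j)
      linarith
    · have : Real.exp (θ ^ 2 * n) ≤ Real.exp ((-θ) * ∑ j, sgnB (e j) * a i j) := by
        apply Real.exp_le_exp.mpr; nlinarith
      have := Real.exp_pos (θ * ∑ j, sgnB (e j) * a i j)
      linarith
  have h1 : (2:ℝ) ^ (Fintype.card J) * Real.exp (θ ^ 2 * n) ≤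
      ∑ e : J → Bool, ∑ i, (Real.exp (θ * ∑ j, sgnB (e j) * a i j) +
        Real.exp ((-θ) * ∑ j, sgnB (e j) * a i j)) := by
    have := Finset.sum_le_sum (fun (e : J → Bool) (_ : e ∈ Finset.univ) => key e)
    simpa using this
  rw [Finset.sum_comm] at h1
  have h2 : ∀ i, ∑ e : J → Bool, (Real.exp (θ * ∑ j, sgnB (e j) * a i j) +
        Real.exp ((-θ) * ∑ j, sgnB (e j) * a i j)) ≤
        2 * (2 ^ (Fintype.card J) * Real.exp (θ ^ 2 * n / 2)) := by
    intro i
    rw [Finset.sum_add_distrib]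
    have h3 := sum_exp_signs (a i) (ha i) θ
    have h4 := sum_exp_signs (a i) (ha i) (-θ)
    rw [neg_sq] at h4
    linarith
  have h5 := h1.trans (Finset.sum_le_sum (fun i _ => h2 i))
  rw [Finset.sum_const, Finset.card_univ, nsmul_eq_mul] at h5
  have h6 : Real.exp (θ ^ 2 * n) = Real.exp (θ ^ 2 * n / 2) * Real.exp (θ ^ 2 * n / 2) := by
    rw [← Real.exp_add]; congr 1; ring
  rw [h6] at h5
  have hp : (0:ℝ) < 2 ^ (Fintype.card J) * Real.exp (θ ^ 2 * n / 2) := by positivity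
  nlinarith


noncomputable section

/-- the index set of the `k`-th block -/
abbrev JJ (k : ℕ) : Type := Fin k → Bool

/-- the set of points of the `k`-th block -/
abbrev GG (k : ℕ) : Type := (Fin k → Bool) × Bool × Bool

/-- the decay rate -/
def th (k : ℕ) : ℝ := 16 * (4 / 5) ^ k

lemma th_pos (k : ℕ) : 0 < th k := by unfold th; positivity

lemma th_succ (k : ℕ) : th (k + 1) = (4 / 5) * th k := by unfold th; ring

lemma th_succ_le (k : ℕ) : th (k + 1) ≤ th k := by
  have := th_pos k; rw [th_succ]; linarith

lemma card_JJ (k : ℕ) : (Fintype.card (JJ k) : ℝ) = 2 ^ k := by simp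

lemma card_GG (k : ℕ) : (Fintype.card (GG k) : ℝ) = 4 * 2 ^ k := by
  simp; ring

lemma card_cond (k : ℕ) (c : ℝ) (hc : c ≤ 32 * 4 ^ k) :
    2 * c < Real.exp (th k ^ 2 * Fintype.card (JJ k) / 2) := by
  have h0 : th k ^ 2 * Fintype.card (JJ k) / 2 = 128 * (32 / 25) ^ k := by
    rw [card_JJ, th, mul_pow, ← pow_mul, mul_comm k 2, pow_mul]
    have : ((4 / 5 : ℝ) ^ 2) ^ k * 2 ^ k = (32 / 25) ^ k := by
      rw [← mul_pow]; norm_num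
    rw [← this]; ring
  rw [h0]
  have h1 : (1 : ℝ) + k * (7 / 25) ≤ (32 / 25) ^ k := by
    have := one_add_mul_le_pow (a := (7 / 25 : ℝ)) (by norm_num) k
    norm_num at this ⊢
    linarith
  have h2 : Real.exp (128 + k * 35) ≤ Real.exp (128 * (32 / 25) ^ k) := by
    apply Real.exp_le_exp.mpr
    have : (0 : ℝ) ≤ k := Nat.cast_nonneg k
    nlinarith
  rw [Real.exp_add, Real.exp_nat_mul] at h2
  have h3 : (129 : ℝ) ≤ Real.exp 128 := by
    have := Real.add_one_le_exp (128 : ℝ); linarith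
  have h4 : (4 : ℝ) ^ k ≤ Real.exp 35 ^ k := by
    apply pow_le_pow_left₀ (by norm_num)
    have := Real.add_one_le_exp (35 : ℝ); linarith
  have h5 : (0 : ℝ) < 4 ^ k := by positivity
  nlinarith

/-- Walsh matrix entry -/
def chi {k : ℕ} (i g : JJ k) : ℝ := ∏ l, (if i l && g l then -1 else 1)

lemma chi_sq {k : ℕ} (i g : JJ k) : chi i g * chi i g = 1 := by
  unfold chi
  rw [← Finset.prod_mul_distrib]
  apply Finset.prod_eq_one
  intro l _
  split_ifs <;> norm_num

lemma chi_orth {k : ℕ} (i i' : JJ k) :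
    ∑ g, chi i g * chi i' g = if i = i' then 2 ^ k else 0 := by
  unfold chi
  simp_rw [← Finset.prod_mul_distrib]
  have h2 : ∑ g : Fin k → Bool, ∏ l, ((if i l && g l then (-1:ℝ) else 1) * (if i' l && g l then -1 else 1))
      = ∏ l, ∑ b : Bool, ((if i l && b then (-1:ℝ) else 1) * (if i' l && b then -1 else 1)) := by
    rw [Finset.prod_univ_sum, Fintype.piFinset_univ]
  rw [h2]
  split_ifs with h
  · subst h
    rw [Finset.prod_congr rfl (g := fun _ => (2:ℝ))]
    · simp
    · intro l _
      cases i l <;> norm_num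
  · obtain ⟨l, hl⟩ := Function.ne_iff.mp h
    apply Finset.prod_eq_zero (Finset.mem_univ l)
    revert hl
    cases i l <;> cases i' l <;> simp

lemma abs_le_one_of_sq {x : ℝ} (h : x * x = 1) : |x| ≤ 1 := by
  rw [abs_le]; constructor <;> nlinarith

lemma mul_sq_one {x y : ℝ} (h : x * x = 1) (h' : y * y = 1) : (x * y) * (x * y) = 1 := by
  calc _ = (x * x) * (y * y) := by ring
    _ = 1 := by rw [h, h']; norm_num

lemma exists_eps (k : ℕ) : ∃ e f : JJ k → ℝ, (∀ j, e j * e j = 1) ∧ (∀ j, f j * f j = 1) ∧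
    (∀ g h : JJ k, |∑ j, e j * (chi j g * chi j h)| ≤ th k * 2 ^ k) ∧
    (∀ g h : JJ k, |∑ j, f j * (chi j g * chi j h)| ≤ th k * 2 ^ k) ∧
    (∀ g h : JJ k, |∑ j, f j * (e j * (chi j g * chi j h))| ≤ th k * 2 ^ k) := by
  have h4 : (0:ℝ) < 4 ^ k := by positivity
  have e4 : (2:ℝ) ^ k * 2 ^ k = 4 ^ k := by rw [← mul_pow]; norm_num
  obtain ⟨e, he, he'⟩ := exists_signs (J := JJ k) (I := JJ k × JJ k)
    (fun p j => chi j p.1 * chi j p.2)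
    (fun p j => abs_le_one_of_sq (mul_sq_one (chi_sq _ _) (chi_sq _ _))) (th k) (th_pos k).le
    (card_cond k _ (by rw [Fintype.card_prod]; push_cast; norm_num; rw [e4]; linarith))
  obtain ⟨f, hf, hf'⟩ := exists_signs (J := JJ k) (I := (JJ k × JJ k) × Bool)
    (fun p j => (if p.2 then 1 else e j) * (chi j p.1.1 * chi j p.1.2))
    (fun p j => abs_le_one_of_sq (mul_sq_one (by split_ifs <;> simp [he])
      (mul_sq_one (chi_sq _ _) (chi_sq _ _)))) (th k) (th_pos k).le
    (card_cond k _ (by rw [Fintype.card_prod, Fintype.card_prod]; push_cast; norm_num; rw [e4]; linarith))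
  rw [card_JJ] at he' hf'
  refine ⟨e, f, he, hf, fun g h => he' (g, h), fun g h => ?_, fun g h => ?_⟩
  · simpa using hf' ((g, h), true)
  · simpa using hf' ((g, h), false)

/-- the combinatorial system -/
structure Sys where
  y : ∀ k, JJ k → GG k → ℝ
  u : ∀ k, JJ (k + 1) → GG k → ℝ
  η : ∀ k, Bool → JJ k → ℝ
  ysq : ∀ k i g, y k i g * y k i g = 1
  usq : ∀ k i g, u k i g * u k i g = 1
  ηsq : ∀ k a i, η k a i * η k a i = 1
  yy : ∀ k i i', ∑ g, y k i g * y k i' g = if i = i' then 4 * 2 ^ k else 0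
  uu : ∀ k i i', ∑ g, u k i g * u k i' g = if i = i' then 4 * 2 ^ k else 0
  yu : ∀ k i i', ∑ g, y k i g * u k i' g = 0
  h1 : ∀ k g h, |(∑ i, y k i g * y k i h) / 2 ^ k - (∑ j, u k j g * u k j h) / 2 ^ (k + 1)|
    ≤ 2 * th k
  h2 : ∀ k a g h, |(∑ j, u k j g * (η (k + 1) a j * y (k + 1) j h)) / 2 ^ (k + 1)| ≤ th (k + 1)
  h3 : ∀ k g h, |(∑ j, η k false j * η k true j * (y k j g * y k j h)) / 2 ^ k| ≤ th k

def pw (x : ℝ) (b : Bool) : ℝ := if b then x else 1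

lemma pw_sq {x : ℝ} (h : x * x = 1) (b : Bool) : pw x b * pw x b = 1 := by
  cases b <;> simp [pw, h]

/-- the functions `y` -/
def yfun {k : ℕ} (e f : JJ k → ℝ) (i : JJ k) (g : GG k) : ℝ :=
  chi i g.1 * (pw (e i) g.2.1 * pw (f i) g.2.2)

/-- the functions `u` -/
def ufun {k : ℕ} (e f : JJ k → ℝ) (j : JJ (k + 1)) (g : GG k) : ℝ :=
  chi (Fin.tail j) g.1 * (pw (sgnB (j 0)) g.2.1 *
    pw (-(e (Fin.tail j) * f (Fin.tail j) * sgnB (j 0))) g.2.2)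

lemma sum_JJ_succ {k : ℕ} (F : JJ (k + 1) → ℝ) :
    ∑ j, F j = ∑ i : JJ k, (F (Fin.cons true i) + F (Fin.cons false i)) := by
  rw [← (Fin.consEquiv (fun _ : Fin (k + 1) => Bool)).sum_comp, Fintype.sum_prod_type]
  simp [Finset.sum_add_distrib, Fin.consEquiv]

lemma sum_GG {k : ℕ} (F : GG k → ℝ) :
    ∑ g, F g = ∑ g : JJ k, (F (g, true, true) + F (g, true, false) + F (g, false, true)
      + F (g, false, false)) := by
  rw [Fintype.sum_prod_type]
  apply Finset.sum_congr rfl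
  intro g _
  rw [Fintype.sum_prod_type]
  simp; ring

lemma yfun_sq {k : ℕ} {e f : JJ k → ℝ} (he : ∀ j, e j * e j = 1) (hf : ∀ j, f j * f j = 1)
    (i : JJ k) (g : GG k) : yfun e f i g * yfun e f i g = 1 :=
  mul_sq_one (chi_sq _ _) (mul_sq_one (pw_sq (he i) _) (pw_sq (hf i) _))

lemma ufun_sq {k : ℕ} {e f : JJ k → ℝ} (he : ∀ j, e j * e j = 1) (hf : ∀ j, f j * f j = 1)
    (i : JJ (k + 1)) (g : GG k) : ufun e f i g * ufun e f i g = 1 :=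
  mul_sq_one (chi_sq _ _) (mul_sq_one (pw_sq (sgnB_mul_self _) _) (pw_sq (by
    rw [neg_mul_neg]; exact mul_sq_one (mul_sq_one (he _) (hf _)) (sgnB_mul_self _)) _))

lemma yfun_orth {k : ℕ} {e f : JJ k → ℝ} (he : ∀ j, e j * e j = 1) (hf : ∀ j, f j * f j = 1)
    (i i' : JJ k) : ∑ g, yfun e f i g * yfun e f i' g = if i = i' then 4 * 2 ^ k else 0 := by
  rw [sum_GG]
  have : ∀ g : JJ k, yfun e f i (g, true, true) * yfun e f i' (g, true, true)
      + yfun e f i (g, true, false) * yfun e f i' (g, true, false)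
      + yfun e f i (g, false, true) * yfun e f i' (g, false, true)
      + yfun e f i (g, false, false) * yfun e f i' (g, false, false)
      = (chi i g * chi i' g) * ((1 + e i * e i') * (1 + f i * f i')) := by
    intro g; simp [yfun, pw]; ring
  simp_rw [this]
  rw [← Finset.sum_mul, chi_orth]
  split_ifs with h
  · subst h; rw [he, hf]; ring
  · simp

lemma ufun_orth {k : ℕ} {e f : JJ k → ℝ} (he : ∀ j, e j * e j = 1) (hf : ∀ j, f j * f j = 1)
    (i i' : JJ (k + 1)) :
    ∑ g, ufun e f i g * ufun e f i' g = if i = i' then 4 * 2 ^ k else 0 := by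
  rw [sum_GG]
  have : ∀ g : JJ k, ufun e f i (g, true, true) * ufun e f i' (g, true, true)
      + ufun e f i (g, true, false) * ufun e f i' (g, true, false)
      + ufun e f i (g, false, true) * ufun e f i' (g, false, true)
      + ufun e f i (g, false, false) * ufun e f i' (g, false, false)
      = (chi (Fin.tail i) g * chi (Fin.tail i') g) * ((1 + sgnB (i 0) * sgnB (i' 0)) *
        (1 + (e (Fin.tail i) * f (Fin.tail i) * sgnB (i 0)) *
          (e (Fin.tail i') * f (Fin.tail i') * sgnB (i' 0)))) := by
    intro g; simp [ufun, pw]; ring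
  simp_rw [this]
  rw [← Finset.sum_mul, chi_orth]
  by_cases h : i = i'
  · subst h
    have := mul_sq_one (mul_sq_one (he (Fin.tail i)) (hf (Fin.tail i))) (sgnB_mul_self (i 0))
    rw [if_pos rfl, if_pos rfl, this, sgnB_mul_self]; ring
  · rw [if_neg h]
    by_cases h0 : Fin.tail i = Fin.tail i'
    · have h1 : i 0 ≠ i' 0 := by
        intro h1
        apply h
        rw [← Fin.cons_self_tail i, ← Fin.cons_self_tail i', h0, h1]
      have : 1 + sgnB (i 0) * sgnB (i' 0) = 0 := by
        revert h1
        cases i 0 <;> cases i' 0 <;> simp [sgnB]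
      rw [this]; ring
    · rw [if_neg h0]; ring

lemma yufun_orth {k : ℕ} {e f : JJ k → ℝ} (he : ∀ j, e j * e j = 1) (hf : ∀ j, f j * f j = 1)
    (i : JJ k) (i' : JJ (k + 1)) :
    ∑ g, yfun e f i g * ufun e f i' g = 0 := by
  rw [sum_GG]
  have : ∀ g : JJ k, yfun e f i (g, true, true) * ufun e f i' (g, true, true)
      + yfun e f i (g, true, false) * ufun e f i' (g, true, false)
      + yfun e f i (g, false, true) * ufun e f i' (g, false, true)
      + yfun e f i (g, false, false) * ufun e f i' (g, false, false)
      = (chi i g * chi (Fin.tail i') g) * ((1 + e i * sgnB (i' 0)) *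
        (1 - f i * (e (Fin.tail i') * f (Fin.tail i') * sgnB (i' 0)))) := by
    intro g; simp [yfun, ufun, pw]; ring
  simp_rw [this]
  rw [← Finset.sum_mul, chi_orth]
  split_ifs with h
  · rw [← h]
    have : (1 + e i * sgnB (i' 0)) * (1 - f i * (e i * f i * sgnB (i' 0))) =
      1 + e i * sgnB (i' 0) - (f i * f i) * (e i * sgnB (i' 0))
        - (f i * f i) * (e i * e i) * (sgnB (i' 0) * sgnB (i' 0)) := by ring
    rw [this, he, hf, sgnB_mul_self]; ring
  · simp

lemma yu_diff {k : ℕ} {e f : JJ k → ℝ} (he : ∀ j, e j * e j = 1) (hf : ∀ j, f j * f j = 1)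
    (h1 : ∀ g h : JJ k, |∑ j, e j * (chi j g * chi j h)| ≤ th k * 2 ^ k)
    (h2 : ∀ g h : JJ k, |∑ j, f j * (chi j g * chi j h)| ≤ th k * 2 ^ k)
    (h3 : ∀ g h : JJ k, |∑ j, f j * (e j * (chi j g * chi j h))| ≤ th k * 2 ^ k) (g h : GG k) :
    |(∑ i, yfun e f i g * yfun e f i h) / 2 ^ k - (∑ j, ufun e f j g * ufun e f j h) / 2 ^ (k + 1)|
      ≤ 2 * th k := by
  rw [sum_JJ_succ]
  have hp : (0:ℝ) < 2 ^ k := by positivity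
  have : (∑ i, yfun e f i g * yfun e f i h) / 2 ^ k -
     (∑ i, (ufun e f (Fin.cons true i) g * ufun e f (Fin.cons true i) h +
       ufun e f (Fin.cons false i) g * ufun e f (Fin.cons false i) h)) / 2 ^ (k + 1)
     = (∑ i, (yfun e f i g * yfun e f i h - (ufun e f (Fin.cons true i) g * ufun e f (Fin.cons true i) h +
       ufun e f (Fin.cons false i) g * ufun e f (Fin.cons false i) h) / 2)) / 2 ^ k := by
    rw [Finset.sum_sub_distrib, ← Finset.sum_div, pow_succ]; field_simp
  rw [this, abs_div, abs_of_pos hp, div_le_iff₀ hp]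
  obtain ⟨g, b, c⟩ := g
  obtain ⟨h, b', c'⟩ := h
  have H1 := h1 g h
  have H2 := h2 g h
  have H3 := h3 g h
  have hθ := th_pos k
  have hpos : 0 ≤ th k * 2 ^ k := by positivity
  have key : ∀ (F : JJ k → ℝ) (x y z : ℝ), |x| + |y| + 2 * |z| ≤ 2 → (∀ i, F i = x * (e i * (chi i g * chi i h)) +
      y * (f i * (chi i g * chi i h)) + z * (2 * (f i * (e i * (chi i g * chi i h))))) →
      |∑ i, F i| ≤ 2 * th k * 2 ^ k := by
    intro F x y z hxyz hF
    have : ∑ i, F i = x * (∑ i, (e i * (chi i g * chi i h))) +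
      y * (∑ i, (f i * (chi i g * chi i h))) + z * (2 * ∑ i, (f i * (e i * (chi i g * chi i h)))) := by
      simp only [Finset.mul_sum]
      rw [← Finset.sum_add_distrib, ← Finset.sum_add_distrib]
      exact Finset.sum_congr rfl (fun i _ => hF i)
    rw [this]
    refine (abs_add_le _ _).trans ?_
    refine (add_le_add_left (abs_add_le _ _) _).trans ?_
    rw [abs_mul, abs_mul, abs_mul, abs_mul, abs_two]
    have a1 := mul_le_mul_of_nonneg_left H1 (abs_nonneg x)
    have a2 := mul_le_mul_of_nonneg_left H2 (abs_nonneg y)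
    have a3 := mul_le_mul_of_nonneg_left H3 (abs_nonneg z)
    nlinarith
  have E : ∀ i, e i ^ 2 = 1 := fun i => by rw [sq]; exact he i
  have Fq : ∀ i, f i ^ 2 = 1 := fun i => by rw [sq]; exact hf i
  cases b <;> cases c <;> cases b' <;> cases c'
  all_goals first
    | (refine key _ 0 0 0 (by norm_num) (fun i => ?_)
       simp [yfun, ufun, pw, sgnB]
       (try ring_nf); (try simp only [E, Fq]); (try ring_nf); done)
    | (refine key _ 1 0 0 (by norm_num) (fun i => ?_)
       simp [yfun, ufun, pw, sgnB]
       (try ring_nf); (try simp only [E, Fq]); (try ring_nf); done)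
    | (refine key _ 0 1 0 (by norm_num) (fun i => ?_)
       simp [yfun, ufun, pw, sgnB]
       (try ring_nf); (try simp only [E, Fq]); (try ring_nf); done)
    | (refine key _ 0 0 1 (by norm_num) (fun i => ?_)
       simp [yfun, ufun, pw, sgnB]
       (try ring_nf); (try simp only [E, Fq]); (try ring_nf); done)

lemma exists_sys : Nonempty Sys := by
  choose e f he hf h1 h2 h3 using exists_eps
  let y : ∀ k, JJ k → GG k → ℝ := fun k => yfun (e k) (f k)
  let u : ∀ k, JJ (k + 1) → GG k → ℝ := fun k => ufun (e k) (f k)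
  have ysq : ∀ k i g, y k i g * y k i g = 1 := fun k => yfun_sq (he k) (hf k)
  have usq : ∀ k i g, u k i g * u k i g = 1 := fun k => ufun_sq (he k) (hf k)
  have hη : ∀ k, ∃ η : Bool → JJ (k + 1) → ℝ, (∀ a i, η a i * η a i = 1) ∧
      (∀ a g h, |∑ j, η a j * (u k j g * y (k + 1) j h)| ≤ th (k + 1) * 2 ^ (k + 1)) ∧
      (∀ g h, |∑ j, η true j * (η false j * (y (k + 1) j g * y (k + 1) j h))|
        ≤ th (k + 1) * 2 ^ (k + 1)) := by
    intro k
    have e4 : (2:ℝ) ^ k * 2 ^ k = 4 ^ k := by rw [← mul_pow]; norm_num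
    have h4 : (0:ℝ) < 4 ^ k := by positivity
    obtain ⟨p, hp, hp'⟩ := exists_signs (J := JJ (k + 1)) (I := GG k × GG (k + 1))
      (fun q j => u k j q.1 * y (k + 1) j q.2)
      (fun q j => abs_le_one_of_sq (mul_sq_one (usq _ _ _) (ysq _ _ _))) (th (k + 1))
      (th_pos _).le
      (card_cond _ _ (by
        rw [Fintype.card_prod]; push_cast; rw [card_GG, card_GG]; simp only [pow_succ]; nlinarith))
    obtain ⟨q, hq, hq'⟩ := exists_signs (J := JJ (k + 1))
      (I := (GG k × GG (k + 1)) ⊕ (GG (k + 1) × GG (k + 1)))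
      (fun r j => Sum.elim (fun r => u k j r.1 * y (k + 1) j r.2)
        (fun r => p j * (y (k + 1) j r.1 * y (k + 1) j r.2)) r)
      (fun r j => abs_le_one_of_sq (by
        rcases r with r | r
        · exact (mul_sq_one (usq _ _ _) (ysq _ _ _))
        · exact (mul_sq_one (hp _) (mul_sq_one (ysq _ _ _) (ysq _ _ _))))) (th (k + 1))
      (th_pos _).le
      (card_cond _ _ (by
        rw [Fintype.card_sum, Fintype.card_prod (GG k), Fintype.card_prod (GG (k + 1))]; push_cast
        rw [card_GG, card_GG]; simp only [pow_succ]; nlinarith))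
    rw [card_JJ] at hp' hq'
    refine ⟨fun a => if a then q else p, ?_, ?_, ?_⟩
    · intro a i; cases a
      · exact hp i
      · exact hq i
    · intro a g h; cases a
      · exact hp' (g, h)
      · exact hq' (Sum.inl (g, h))
    · intro g h
      exact hq' (Sum.inr (g, h))
  choose η hη1 hη2 hη3 using hη
  let η' : ∀ k, Bool → JJ k → ℝ := fun k => match k with
    | 0 => fun _ _ => 1
    | k + 1 => η k
  exact ⟨{
    y := y
    u := u
    η := η'
    ysq := ysq
    usq := usq
    ηsq := by
      intro k a i
      cases k with
      | zero => simp [η']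
      | succ k => exact hη1 k a i
    yy := fun k => yfun_orth (he k) (hf k)
    uu := fun k => ufun_orth (he k) (hf k)
    yu := fun k => yufun_orth (he k) (hf k)
    h1 := fun k => yu_diff (he k) (hf k) (h1 k) (h2 k) (h3 k)
    h2 := by
      intro k a g h
      have hp : (0:ℝ) < 2 ^ (k + 1) := by positivity
      rw [abs_div, abs_of_pos hp, div_le_iff₀ hp]
      refine le_trans (le_of_eq ?_) (hη2 k a g h)
      congr 1
      apply Finset.sum_congr rfl
      intro j _
      show u k j g * (η k a j * y (k + 1) j h) = _
      ring
    h3 := by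
      intro k g h
      have hp : (0:ℝ) < 2 ^ k := by positivity
      rw [abs_div, abs_of_pos hp, div_le_iff₀ hp]
      cases k with
      | zero =>
        simp only [η', one_mul, Finset.univ_unique, Finset.sum_singleton]
        refine (abs_le_one_of_sq (mul_sq_one (ysq _ _ _) (ysq _ _ _))).trans ?_
        norm_num [th]
      | succ k =>
        refine le_trans (le_of_eq ?_) (hη3 k g h)
        congr 1
        apply Finset.sum_congr rfl
        intro j _
        show η k false j * η k true j * _ = _
        ring }⟩

end


noncomputable section

/-- The algebra attached to a Banach space and a subspace of its dual -/
def Tri (X : Type) [NormedAddCommGroup X] [NormedSpace ℂ X]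
    (Y : Submodule ℂ (StrongDual ℂ X)) : Type := X × Y × ℂ

namespace Tri

variable {X : Type} [NormedAddCommGroup X] [NormedSpace ℂ X] {Y : Submodule ℂ (StrongDual ℂ X)}

instance : NormedAddCommGroup (Tri X Y) := inferInstanceAs (NormedAddCommGroup (X × Y × ℂ))

instance : NormedSpace ℂ (Tri X Y) := inferInstanceAs (NormedSpace ℂ (X × Y × ℂ))

instance [CompleteSpace X] [CompleteSpace Y] : CompleteSpace (Tri X Y) :=
  inferInstanceAs (CompleteSpace (X × Y × ℂ))

instance [TopologicalSpace.SeparableSpace X] [TopologicalSpace.SeparableSpace Y] :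
    TopologicalSpace.SeparableSpace (Tri X Y) :=
  inferInstanceAs (TopologicalSpace.SeparableSpace (X × Y × ℂ))

/-- constructor -/
def mk (x : X) (y : Y) (z : ℂ) : Tri X Y := (x, y, z)

/-- first coordinate -/
def p (a : Tri X Y) : X := Prod.fst a
/-- second coordinate -/
def q (a : Tri X Y) : Y := Prod.fst (Prod.snd a)
/-- third coordinate -/
def r (a : Tri X Y) : ℂ := Prod.snd (Prod.snd a)

instance : Mul (Tri X Y) :=
  ⟨fun a b => mk 0 0 (((a.q : StrongDual ℂ X) b.p + (b.q : StrongDual ℂ X) a.p) / 2)⟩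

lemma mul_def (a b : Tri X Y) :
    a * b = mk 0 0 (((a.q : StrongDual ℂ X) b.p + (b.q : StrongDual ℂ X) a.p) / 2) := rfl

lemma norm_def (a : Tri X Y) : ‖a‖ = max ‖a.p‖ (max ‖a.q‖ ‖a.r‖) := rfl

lemma ext3 {a b : Tri X Y} (h1 : a.p = b.p) (h2 : a.q = b.q) (h3 : a.r = b.r) : a = b :=
  Prod.ext h1 (Prod.ext h2 h3)

lemma mk_1 (x : X) (y : Y) (z : ℂ) : (mk x y z).p = x := rfl
lemma mk_2 (x : X) (y : Y) (z : ℂ) : (mk x y z).q = y := rfl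
lemma mk_3 (x : X) (y : Y) (z : ℂ) : (mk x y z).r = z := rfl
lemma add_1 (a b : Tri X Y) : (a + b).p = a.p + b.p := rfl
lemma add_2 (a b : Tri X Y) : (a + b).q = a.q + b.q := rfl
lemma add_3 (a b : Tri X Y) : (a + b).r = a.r + b.r := rfl
lemma smul_1 (c : ℂ) (b : Tri X Y) : (c • b).p = c • b.p := rfl
lemma smul_2 (c : ℂ) (b : Tri X Y) : (c • b).q = c • b.q := rfl
lemma smul_3 (c : ℂ) (b : Tri X Y) : (c • b).r = c • b.r := rfl
lemma zero_1 : (0 : Tri X Y).p = 0 := rfl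
lemma zero_2 : (0 : Tri X Y).q = 0 := rfl
lemma zero_3 : (0 : Tri X Y).r = 0 := rfl
lemma mul_1 (a b : Tri X Y) : (a * b).p = 0 := rfl
lemma mul_2 (a b : Tri X Y) : (a * b).q = 0 := rfl
lemma mul_3 (a b : Tri X Y) : (a * b).r =
    ((a.q : StrongDual ℂ X) b.p + (b.q : StrongDual ℂ X) a.p) / 2 := rfl

instance : NonUnitalNormedCommRing (Tri X Y) :=
  { (inferInstance : NormedAddCommGroup (Tri X Y)), (inferInstance : Mul (Tri X Y)) with
    left_distrib := fun a b c => ext3 (by simp [mul_1, add_1]) (by simp [mul_2, add_2])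
      (by simp [mul_3, add_1, add_2, add_3]; ring)
    right_distrib := fun a b c => ext3 (by simp [mul_1, add_1]) (by simp [mul_2, add_2])
      (by simp [mul_3, add_1, add_2, add_3]; ring)
    zero_mul := fun a => ext3 (by simp [mul_1, zero_1]) (by simp [mul_2, zero_2])
      (by simp [mul_3, zero_1, zero_2, zero_3])
    mul_zero := fun a => ext3 (by simp [mul_1, zero_1]) (by simp [mul_2, zero_2])
      (by simp [mul_3, zero_1, zero_2, zero_3])
    mul_assoc := fun a b c => ext3 (by simp [mul_1]) (by simp [mul_2])
      (by simp [mul_3, mul_1, mul_2])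
    mul_comm := fun a b => ext3 (by simp [mul_1]) (by simp [mul_2])
      (by simp [mul_3, add_comm])
    norm_mul_le := fun a b => by
      have h1 : ‖(a.q : StrongDual ℂ X) b.p‖ ≤ ‖a‖ * ‖b‖ := by
        refine (ContinuousLinearMap.le_opNorm _ _).trans ?_
        apply mul_le_mul _ _ (norm_nonneg _) (norm_nonneg _)
        · rw [norm_def a]; exact (le_max_left _ _).trans (le_max_right _ _)
        · rw [norm_def b]; exact (le_max_left _ _)
      have h2 : ‖(b.q : StrongDual ℂ X) a.p‖ ≤ ‖a‖ * ‖b‖ := by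
        refine (ContinuousLinearMap.le_opNorm _ _).trans ?_
        rw [mul_comm]
        apply mul_le_mul _ _ (norm_nonneg _) (norm_nonneg _)
        · rw [norm_def a]; exact (le_max_left _ _)
        · rw [norm_def b]; exact (le_max_left _ _).trans (le_max_right _ _)
      have h3 : ‖a * b‖ = ‖((a.q : StrongDual ℂ X) b.p + (b.q : StrongDual ℂ X) a.p) / 2‖ := by
        rw [norm_def, mul_1, mul_2, mul_3]; simp; positivity
      show ‖a * b‖ ≤ ‖a‖ * ‖b‖
      rw [h3, norm_div, Complex.norm_two]
      have := norm_add_le ((a.q : StrongDual ℂ X) b.p) ((b.q : StrongDual ℂ X) a.p)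
      linarith }

instance : IsScalarTower ℂ (Tri X Y) (Tri X Y) :=
  ⟨fun c a b => ext3 (by simp [mul_1, smul_1]) (by simp [mul_2, smul_2])
      (by simp [mul_3, smul_1, smul_2, smul_3]; ring)⟩

instance : SMulCommClass ℂ (Tri X Y) (Tri X Y) :=
  ⟨fun c a b => ext3 (by simp [mul_1, smul_1]) (by simp [mul_2, smul_2])
      (by simp [mul_3, smul_1, smul_2, smul_3]; ring)⟩

/-- inclusion of `X` -/
def inX : X →ₗ[ℂ] Tri X Y := LinearMap.inl ℂ X (Y × ℂ)
/-- inclusion of `Y` -/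
def inY : Y →ₗ[ℂ] Tri X Y := (LinearMap.inr ℂ X (Y × ℂ)).comp (LinearMap.inl ℂ Y ℂ)

lemma inX_1 (x : X) : (inX x : Tri X Y).p = x := rfl
lemma inX_2 (x : X) : (inX x : Tri X Y).q = 0 := rfl
lemma inX_3 (x : X) : (inX x : Tri X Y).r = 0 := rfl
lemma inY_1 (y : Y) : (inY y : Tri X Y).p = 0 := rfl
lemma inY_2 (y : Y) : (inY y : Tri X Y).q = y := rfl
lemma inY_3 (y : Y) : (inY y : Tri X Y).r = 0 := rfl

lemma inX_mul_inY (x : X) (y : Y) : (inX x : Tri X Y) * inY y =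
    (y : StrongDual ℂ X) x • mk 0 0 (1 / 2) :=
  ext3 (by simp [mul_1, smul_1, mk_1]) (by simp [mul_2, smul_2, mk_2])
      (by simp [mul_3, smul_3, mk_3, inX_1, inX_2, inY_1, inY_2]; ring)

lemma norm_inX (x : X) : ‖(inX x : Tri X Y)‖ = ‖x‖ := by
  rw [norm_def, inX_1, inX_2, inX_3]; simp

lemma norm_inY (y : Y) : ‖(inY y : Tri X Y)‖ = ‖y‖ := by
  rw [norm_def, inY_1, inY_2, inY_3]; simp

lemma mk_ne : (mk 0 0 (1 / 2) : Tri X Y) ≠ 0 := by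
  intro h
  have := congrArg (fun a : Tri X Y => a.r) h
  simp [mk_3, zero_3] at this

end Tri
end


noncomputable section

open scoped BoundedContinuousFunction

/-- the disjoint union of the point sets -/
abbrev Gam : Type := Σ k, GG k

/-- extension by zero -/
def ext0 (k : ℕ) (f : GG k → ℝ) (x : Gam) : ℝ :=
  (Pi.single k f : ∀ m, GG m → ℝ) x.1 x.2

lemma ext0_same (k : ℕ) (f : GG k → ℝ) (g : GG k) : ext0 k f ⟨k, g⟩ = f g := by
  simp [ext0]

lemma ext0_ne {k m : ℕ} (h : m ≠ k) (f : GG k → ℝ) (g : GG m) : ext0 k f ⟨m, g⟩ = 0 := by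
  simp [ext0, Pi.single_eq_of_ne h]

/-- the part of the generator living on the previous block -/
def pre (S : Sys) : ∀ k, JJ k → Gam → ℝ
  | 0, _ => fun _ => 0
  | k + 1, j => ext0 k (S.u k j)

/-- the generators as functions -/
def eraw (S : Sys) (s : ℕ → Bool) (k : ℕ) (j : JJ k) (x : Gam) : ℝ :=
  ext0 k (fun g => S.η k (s k) j * S.y k j g) x + pre S k j x

variable (S : Sys) (s : ℕ → Bool)

lemma eraw_self (k : ℕ) (j : JJ k) (g : GG k) :
    eraw S s k j ⟨k, g⟩ = S.η k (s k) j * S.y k j g := by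
  rw [eraw, ext0_same]
  cases k with
  | zero => simp [pre]
  | succ k => rw [pre, ext0_ne (by omega), add_zero]

lemma eraw_prev (k : ℕ) (j : JJ (k + 1)) (g : GG k) :
    eraw S s (k + 1) j ⟨k, g⟩ = S.u k j g := by
  rw [eraw, ext0_ne (by omega), pre, ext0_same, zero_add]

lemma eraw_other {k m : ℕ} (h : m ≠ k) (h' : m + 1 ≠ k) (j : JJ k) (g : GG m) :
    eraw S s k j ⟨m, g⟩ = 0 := by
  rw [eraw, ext0_ne h]
  cases k with
  | zero => simp [pre]
  | succ k => rw [pre, ext0_ne (by omega), add_zero]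

lemma eraw_abs (k : ℕ) (j : JJ k) (x : Gam) : |eraw S s k j x| ≤ 1 := by
  obtain ⟨m, g⟩ := x
  by_cases h : m = k
  · subst h; rw [eraw_self]; exact abs_le_one_of_sq (mul_sq_one (S.ηsq _ _ _) (S.ysq _ _ _))
  by_cases h' : m + 1 = k
  · subst h'; rw [eraw_prev]; exact abs_le_one_of_sq (S.usq _ _ _)
  · rw [eraw_other S s h h']; simp

/-- the generators -/
def evec (k : ℕ) (j : JJ k) : Gam →ᵇ ℂ :=
  BoundedContinuousFunction.ofNormedAddCommGroupDiscrete (fun x => (eraw S s k j x : ℂ)) 1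
    (fun x => by rw [Complex.norm_real]; exact eraw_abs S s k j x)

/-- the uncompleted space -/
def ES0 : Submodule ℂ (Gam →ᵇ ℂ) :=
  Submodule.span ℂ (Set.range (fun p : Σ k, JJ k => evec S s p.1 p.2))

/-- the space -/
def ES : Submodule ℂ (Gam →ᵇ ℂ) := (ES0 S s).topologicalClosure

/-- the space as a type -/
def ESp : Type := ↥(ES S s)

instance : NormedAddCommGroup (ESp S s) := inferInstanceAs (NormedAddCommGroup (ES S s))

instance : NormedSpace ℂ (ESp S s) := inferInstanceAs (NormedSpace ℂ (ES S s))

/-- the inclusion -/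
def valE : ESp S s →L[ℂ] (Gam →ᵇ ℂ) := (ES S s).subtypeL

lemma mem_ES0 (k : ℕ) (j : JJ k) : evec S s k j ∈ ES0 S s :=
  Submodule.subset_span ⟨⟨k, j⟩, rfl⟩

/-- the generators in the space -/
def el (k : ℕ) (j : JJ k) : ESp S s :=
  ⟨evec S s k j, Submodule.le_topologicalClosure _ (mem_ES0 S s k j)⟩

lemma el_apply (k : ℕ) (j : JJ k) (x : Gam) : (valE S s (el S s k j)) x = (eraw S s k j x : ℂ) :=
  rfl

/-- the evaluation functionals -/
def dl (x : Gam) : StrongDual ℂ (ESp S s) :=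
  (BoundedContinuousFunction.evalCLM ℂ x).comp (valE S s)

lemma dl_apply (x : Gam) (v : ESp S s) : dl S s x v = (valE S s (v)) x := rfl

/-- the predual-like space of functionals -/
def ED : Submodule ℂ (StrongDual ℂ (ESp S s)) :=
  (Submodule.span ℂ (Set.range (dl S s))).topologicalClosure

/-- the evaluation functionals in the space of functionals -/
def de (x : Gam) : ED S s :=
  ⟨dl S s x, Submodule.le_topologicalClosure _ (Submodule.subset_span ⟨x, rfl⟩)⟩

lemma de_apply (x : Gam) (v : ESp S s) :
    (de S s x : StrongDual ℂ (ESp S s)) v = (valE S s (v)) x := rfl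

lemma norm_de (x : Gam) : ‖de S s x‖ ≤ 1 := by
  show ‖dl S s x‖ ≤ 1
  refine ContinuousLinearMap.opNorm_le_bound _ zero_le_one (fun v => ?_)
  rw [dl_apply, one_mul]
  exact BoundedContinuousFunction.norm_coe_le_norm (valE S s (v)) x

instance : CompleteSpace (ESp S s) :=
  inferInstanceAs (CompleteSpace (ES0 S s).topologicalClosure)

instance : CompleteSpace (ED S s) :=
  (Submodule.isClosed_topologicalClosure _).completeSpace_coe

instance : TopologicalSpace.SeparableSpace (ESp S s) := by
  have : TopologicalSpace.IsSeparable (ES S s : Set (Gam →ᵇ ℂ)) :=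
    ((Set.countable_range _).isSeparable.span (R := ℂ)).closure
  exact this.separableSpace

instance : TopologicalSpace.SeparableSpace (ED S s) := by
  have : TopologicalSpace.IsSeparable (ED S s : Set (StrongDual ℂ (ESp S s))) :=
    ((Set.countable_range _).isSeparable.span (R := ℂ)).closure
  exact this.separableSpace

lemma dual_ext (f g : StrongDual ℂ (ESp S s)) (h : ∀ k j, f (el S s k j) = g (el S s k j)) :
    f = g := by
  have hd : DenseRange (Set.inclusion (Submodule.le_topologicalClosure (ES0 S s))) :=
    denseRange_inclusion_iff _ |>.mpr (subset_of_eq (Submodule.topologicalClosure_coe _))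
  have := hd.equalizer f.continuous g.continuous (by
    funext ⟨v, hv⟩
    show f ⟨v, _⟩ = g ⟨v, _⟩
    have key : ∀ (v : Gam →ᵇ ℂ) (hv : v ∈ ES0 S s),
        f ⟨v, Submodule.le_topologicalClosure _ hv⟩ =
        g ⟨v, Submodule.le_topologicalClosure _ hv⟩ := by
      intro v hv
      induction hv using Submodule.span_induction with
      | mem x hx => obtain ⟨⟨k, j⟩, rfl⟩ := hx; exact h k j
      | zero => exact (map_zero f).trans (map_zero g).symm
      | add x y hx hy h1 h2 =>
        have e1 := map_add f (⟨x, Submodule.le_topologicalClosure _ hx⟩ : ESp S s)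
          ⟨y, Submodule.le_topologicalClosure _ hy⟩
        have e2 := map_add g (⟨x, Submodule.le_topologicalClosure _ hx⟩ : ESp S s)
          ⟨y, Submodule.le_topologicalClosure _ hy⟩
        exact e1.trans ((congrArg₂ (· + ·) h1 h2).trans e2.symm)
      | smul a x hx h1 =>
        have e1 := map_smul f a (⟨x, Submodule.le_topologicalClosure _ hx⟩ : ESp S s)
        have e2 := map_smul g a (⟨x, Submodule.le_topologicalClosure _ hx⟩ : ESp S s)
        exact e1.trans ((congrArg (fun z => a • z) h1).trans e2.symm)
    exact key v hv)
  exact DFunLike.coe_injective this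

/-- a combination of evaluations at the points of one block -/
def dcomb (k : ℕ) (w : GG k → ℝ) : ED S s :=
  ((4 * 2 ^ k : ℝ) : ℂ)⁻¹ • ∑ g, (w g : ℂ) • de S s ⟨k, g⟩

lemma dcomb_apply (k : ℕ) (w : GG k → ℝ) (m : ℕ) (i : JJ m) :
    (dcomb S s k w : StrongDual ℂ (ESp S s)) (el S s m i) =
      (((4 * 2 ^ k : ℝ)⁻¹ * ∑ g, w g * eraw S s m i ⟨k, g⟩ : ℝ) : ℂ) := by
  simp [dcomb, de_apply, el_apply]

lemma norm_avg_le {V : Type} [NormedAddCommGroup V] [NormedSpace ℂ V] {k : ℕ} (w : GG k → ℝ)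
    (hw : ∀ g, |w g| ≤ 1) (d : GG k → V) (hd : ∀ g, ‖d g‖ ≤ 1) :
    ‖((4 * 2 ^ k : ℝ) : ℂ)⁻¹ • ∑ g, (w g : ℂ) • d g‖ ≤ 1 := by
  have hp : (0:ℝ) < 4 * 2 ^ k := by positivity
  rw [norm_smul, norm_inv, Complex.norm_real, Real.norm_of_nonneg hp.le,
    inv_mul_le_iff₀ hp, mul_one, ← card_GG]
  refine (norm_sum_le _ _).trans ?_
  refine (Finset.sum_le_card_nsmul _ _ 1 ?_).trans (by simp)
  intro g _
  rw [norm_smul, Complex.norm_real]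
  exact mul_le_one₀ (hw g) (norm_nonneg _) (hd g)

lemma norm_dcomb (k : ℕ) (w : GG k → ℝ) (hw : ∀ g, |w g| ≤ 1) : ‖dcomb S s k w‖ ≤ 1 :=
  norm_avg_le w hw (fun g => de S s ⟨k, g⟩) (fun g => norm_de S s _)

/-- biorthogonal functionals -/
def alphaA (k : ℕ) (j : JJ k) : ED S s := dcomb S s k (fun g => S.η k (s k) j * S.y k j g)

/-- biorthogonal functionals, other formula -/
def alphaB (k : ℕ) (j : JJ (k + 1)) : ED S s := dcomb S s k (fun g => S.u k j g)

lemma alphaA_self (k : ℕ) (j i : JJ k) :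
    (alphaA S s k j : StrongDual ℂ (ESp S s)) (el S s k i) = if j = i then 1 else 0 := by
  rw [alphaA, dcomb_apply]
  have : ∀ g, S.η k (s k) j * S.y k j g * eraw S s k i ⟨k, g⟩ =
      S.η k (s k) j * S.η k (s k) i * (S.y k j g * S.y k i g) := by
    intro g; rw [eraw_self]; ring
  simp_rw [this]
  rw [← Finset.mul_sum, S.yy]
  have hp : (4 * 2 ^ k : ℝ) ≠ 0 := by positivity
  split_ifs with h
  · subst h; rw [S.ηsq, one_mul, inv_mul_cancel₀ hp]; simp
  · simp

lemma alphaA_ne (k : ℕ) (j : JJ k) {m : ℕ} (h : m ≠ k) (i : JJ m) :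
    (alphaA S s k j : StrongDual ℂ (ESp S s)) (el S s m i) = 0 := by
  rw [alphaA, dcomb_apply]
  by_cases h' : k + 1 = m
  · subst h'
    have : ∀ g, S.η k (s k) j * S.y k j g * eraw S s (k + 1) i ⟨k, g⟩ =
      S.η k (s k) j * (S.y k j g * S.u k i g) := by
      intro g; rw [eraw_prev]; ring
    simp_rw [this]
    rw [← Finset.mul_sum, S.yu]; simp
  · simp [eraw_other S s (Ne.symm h) h']

lemma alphaB_self (k : ℕ) (j i : JJ (k + 1)) :
    (alphaB S s k j : StrongDual ℂ (ESp S s)) (el S s (k + 1) i) = if j = i then 1 else 0 := by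
  rw [alphaB, dcomb_apply]
  simp_rw [eraw_prev]
  rw [S.uu]
  have hp : (4 * 2 ^ k : ℝ) ≠ 0 := by positivity
  split_ifs with h
  · rw [inv_mul_cancel₀ hp]; simp
  · simp

lemma alphaB_ne (k : ℕ) (j : JJ (k + 1)) {m : ℕ} (h : m ≠ k + 1) (i : JJ m) :
    (alphaB S s k j : StrongDual ℂ (ESp S s)) (el S s m i) = 0 := by
  rw [alphaB, dcomb_apply]
  by_cases h' : k = m
  · subst h'
    have : ∀ g, S.u k j g * eraw S s k i ⟨k, g⟩ =
      S.η k (s k) i * (S.y k i g * S.u k j g) := by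
      intro g; rw [eraw_self]; ring
    simp_rw [this]
    rw [← Finset.mul_sum, S.yu]; simp
  · simp [eraw_other S s h' (Ne.symm h)]

lemma alphaA_eq_alphaB (k : ℕ) (j : JJ (k + 1)) : alphaA S s (k + 1) j = alphaB S s k j := by
  apply Subtype.ext
  apply dual_ext
  intro m i
  by_cases h : m = k + 1
  · subst h; rw [alphaA_self, alphaB_self]
  · rw [alphaA_ne S s _ _ h, alphaB_ne S s _ _ h]

lemma norm_alphaA (k : ℕ) (j : JJ k) : ‖alphaA S s k j‖ ≤ 1 :=
  norm_dcomb S s k _ (fun _ => abs_le_one_of_sq (mul_sq_one (S.ηsq _ _ _) (S.ysq _ _ _)))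

/-- averages of generators -/
def ecomb (k : ℕ) (w : JJ k → ℝ) : ESp S s :=
  ((2 ^ k : ℝ) : ℂ)⁻¹ • ∑ j, (w j : ℂ) • el S s k j

lemma ecomb_apply (k : ℕ) (w : JJ k → ℝ) (x : Gam) :
    (valE S s (ecomb S s k w)) x = (((∑ j, w j * eraw S s k j x) / 2 ^ k : ℝ) : ℂ) := by
  rw [← dl_apply]
  simp only [ecomb, map_smul, map_sum, dl_apply, el_apply]
  simp [div_eq_inv_mul]

lemma norm_ES_le (v : ESp S s) (C : ℝ) (hC : 0 ≤ C) (h : ∀ x, ‖(valE S s (v)) x‖ ≤ C) :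
    ‖v‖ ≤ C := (BoundedContinuousFunction.norm_le hC).mpr h

/-- the vectors `Y` -/
def Yv (t : ℕ → Bool) (k : ℕ) (g : GG k) : ESp S s :=
  ecomb S s k (fun j => S.η k (t k) j * S.y k j g)

/-- the vectors `U` -/
def Uv (k : ℕ) (g : GG k) : ESp S s :=
  ecomb S s (k + 1) (fun j => S.u k j g)

lemma Y_prev (t : ℕ → Bool) (m : ℕ) (g : GG (m + 1)) (h : GG m) :
    ‖(valE S s (Yv S s t (m + 1) g)) ⟨m, h⟩‖ ≤ th (m + 1) := by
  rw [Yv, ecomb_apply, Complex.norm_real]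
  simp_rw [eraw_prev]
  refine le_trans (le_of_eq ?_) (S.h2 m (t (m + 1)) h g)
  rw [Real.norm_eq_abs]
  congr 2
  exact Finset.sum_congr rfl (fun j _ => mul_comm _ _)

lemma Y_other (t : ℕ → Bool) {k m : ℕ} (h : m ≠ k) (h' : m + 1 ≠ k) (g : GG k) (x : GG m) :
    (valE S s (Yv S s t k g)) ⟨m, x⟩ = 0 := by
  rw [Yv, ecomb_apply]
  simp [eraw_other S s h h']

lemma norm_Yv (t : ℕ → Bool) (k : ℕ) (h : s k ≠ t k) (g : GG k) : ‖Yv S s t k g‖ ≤ th k := by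
  apply norm_ES_le _ _ _ _ (th_pos k).le
  rintro ⟨m, x⟩
  by_cases h1 : m = k
  · subst h1
    rw [Yv, ecomb_apply, Complex.norm_real]
    refine le_trans (le_of_eq ?_) (S.h3 m g x)
    rw [Real.norm_eq_abs]
    congr 2
    apply Finset.sum_congr rfl
    intro j _
    rw [eraw_self]
    revert h
    cases s m <;> cases t m <;> simp <;> ring
  by_cases h2 : m + 1 = k
  · subst h2; exact Y_prev S s t m g x
  · rw [Y_other S s t h1 h2, norm_zero]; exact (th_pos k).le

lemma norm_Uv_sub_Yv (t : ℕ → Bool) (k : ℕ) (h : s k = t k) (g : GG k) :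
    ‖Uv S s k g - Yv S s t k g‖ ≤ 2 * th k := by
  have hp := th_pos k
  apply norm_ES_le _ _ _ _ (by linarith)
  rintro ⟨m, x⟩
  rw [map_sub, BoundedContinuousFunction.sub_apply]
  by_cases h1 : m = k
  · subst h1
    rw [Uv, Yv, ecomb_apply, ecomb_apply, ← Complex.ofReal_sub, Complex.norm_real,
      Real.norm_eq_abs, abs_sub_comm]
    refine le_trans (le_of_eq ?_) (S.h1 m g x)
    congr 3
    · apply Finset.sum_congr rfl
      intro j _
      rw [eraw_self, h]
      linear_combination (S.y m j g * S.y m j x) * S.ηsq m (t m) j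
    · apply Finset.sum_congr rfl
      intro j _
      rw [eraw_prev]
  by_cases h2 : m + 1 = k
  · subst h2
    have : (valE S s (Uv S s (m + 1) g)) ⟨m, x⟩ = 0 := by
      rw [Uv, ecomb_apply]
      have e : ∀ j, eraw S s (m + 1 + 1) j ⟨m, x⟩ = 0 := fun j =>
        eraw_other S s (by omega) (by omega) j x
      simp [e]
    rw [this, zero_sub, norm_neg]
    have := Y_prev S s t m g x
    linarith
  rw [Y_other S s t h1 h2, sub_zero]
  by_cases h3 : m = k + 1
  · subst h3
    rw [Uv, ecomb_apply, Complex.norm_real]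
    simp_rw [eraw_self]
    have := S.h2 k (s (k + 1)) g x
    have h4 := th_succ_le k
    rw [Real.norm_eq_abs]
    linarith
  · have : (valE S s (Uv S s k g)) ⟨m, x⟩ = 0 := by
      rw [Uv, ecomb_apply]
      have e : ∀ j, eraw S s (k + 1) j ⟨m, x⟩ = 0 := fun j =>
        eraw_other S s h3 (by omega) j x
      simp [e]
    rw [this, norm_zero]; linarith

end


noncomputable section

open scoped BoundedContinuousFunction

section core

variable {B : Type} [NonUnitalNormedCommRing B] [NormedSpace ℂ B] [IsScalarTower ℂ B B]
  [SMulCommClass ℂ B B]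

lemma swap_sum {V W J G : Type} [AddCommGroup V] [Module ℂ V] [AddCommGroup W] [Module ℂ W]
    [Fintype J] [Fintype G] (P : V →ₗ[ℂ] B) (Q : W →ₗ[ℂ] B) (a c : ℂ) (w : J → G → ℂ)
    (e : J → V) (d : G → W) :
    a • ∑ j, P (e j) * Q (c • ∑ g, w j g • d g) =
      c • ∑ g, P (a • ∑ j, w j g • e j) * Q (d g) := by
  simp only [map_smul, map_sum, Finset.smul_sum, Finset.mul_sum, Finset.sum_mul,
    smul_mul_assoc, mul_smul_comm]
  rw [Finset.sum_comm]
  refine Finset.sum_congr rfl (fun g _ => Finset.sum_congr rfl (fun j _ => ?_))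
  rw [smul_comm a c]

lemma norm_avg_mul {V : Type} [NormedAddCommGroup V] [Module ℂ V]
    (P : V →ₗ[ℂ] B) (hP : ∀ v, ‖P v‖ ≤ ‖v‖) {k : ℕ} (v : GG k → V) (q : GG k → B)
    (hd : ∀ g, ‖q g‖ ≤ 1) (C : ℝ) (hC : ∀ g, ‖v g‖ ≤ C) :
    ‖((4 * 2 ^ k : ℝ) : ℂ)⁻¹ • ∑ g, P (v g) * q g‖ ≤ C := by
  have hp : (0:ℝ) < 4 * 2 ^ k := by positivity
  rw [norm_smul, norm_inv, Complex.norm_real, Real.norm_of_nonneg hp.le,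
    inv_mul_le_iff₀ hp, ← card_GG]
  refine (norm_sum_le _ _).trans ?_
  refine (Finset.sum_le_card_nsmul _ _ C ?_).trans (by simp)
  intro g _
  refine (norm_mul_le _ _).trans ?_
  have h1 := (hP (v g)).trans (hC g)
  have h2 := hd g
  have h3 := norm_nonneg (P (v g))
  have h4 := norm_nonneg (q g)
  nlinarith

variable (S : Sys) (s t : ℕ → Bool) (P : ESp S s →ₗ[ℂ] B) (Q : ED S t →ₗ[ℂ] B)

/-- the averaged products -/
def bb (k : ℕ) : B := ((2 ^ k : ℝ) : ℂ)⁻¹ • ∑ j, P (el S s k j) * Q (alphaA S t k j)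

lemma bb_eq_Y (k : ℕ) : bb S s t P Q k =
    ((4 * 2 ^ k : ℝ) : ℂ)⁻¹ • ∑ g, P (Yv S s t k g) * Q (de S t ⟨k, g⟩) :=
  swap_sum P Q _ _ (fun j g => ((S.η k (t k) j * S.y k j g : ℝ) : ℂ)) (fun j => el S s k j)
    (fun g => de S t ⟨k, g⟩)

lemma bb_eq_U (k : ℕ) : bb S s t P Q (k + 1) =
    ((4 * 2 ^ k : ℝ) : ℂ)⁻¹ • ∑ g, P (Uv S s k g) * Q (de S t ⟨k, g⟩) := by
  unfold bb
  simp_rw [alphaA_eq_alphaB]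
  exact swap_sum P Q _ _ (fun j g => ((S.u k j g : ℝ) : ℂ)) (fun j => el S s (k + 1) j)
    (fun g => de S t ⟨k, g⟩)

lemma norm_bb_of_ne (hP : ∀ v, ‖P v‖ ≤ ‖v‖) (hQ : ∀ x, ‖Q (de S t x)‖ ≤ 1)
    (k : ℕ) (h : s k ≠ t k) : ‖bb S s t P Q k‖ ≤ th k := by
  rw [bb_eq_Y]
  exact norm_avg_mul P hP _ (fun g => Q (de S t ⟨k, g⟩)) (fun g => hQ _) _ (fun g => norm_Yv S s t k h g)

lemma norm_bb_sub (hP : ∀ v, ‖P v‖ ≤ ‖v‖) (hQ : ∀ x, ‖Q (de S t x)‖ ≤ 1)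
    (k : ℕ) (h : s k = t k) :
    ‖bb S s t P Q (k + 1) - bb S s t P Q k‖ ≤ 2 * th k := by
  rw [bb_eq_U, bb_eq_Y S s t P Q k, ← smul_sub, ← Finset.sum_sub_distrib]
  simp_rw [← sub_mul, ← map_sub]
  exact norm_avg_mul P hP _ (fun g => Q (de S t ⟨k, g⟩)) (fun g => hQ _) _ (fun g => norm_Uv_sub_Yv S s t k h g)

lemma norm_bb_le (hP : ∀ v, ‖P v‖ ≤ ‖v‖) (hQ : ∀ x, ‖Q (de S t x)‖ ≤ 1)
    (d : ℕ) : ∀ k, s (k + d) ≠ t (k + d) → (∀ m, k ≤ m → m < k + d → s m = t m) →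
    ‖bb S s t P Q k‖ ≤ 10 * th k := by
  induction d with
  | zero =>
    intro k h _
    have := norm_bb_of_ne S s t P Q hP hQ k h
    have := th_pos k
    linarith
  | succ d ih =>
    intro k h h'
    have h1 := ih (k + 1) (by rwa [show k + 1 + d = k + (d + 1) by ring])
      (fun m hm hm' => h' m (by omega) (by omega))
    have h2 := norm_bb_sub S s t P Q hP hQ k (h' k le_rfl (by omega))
    rw [th_succ] at h1
    have h3 : bb S s t P Q k = bb S s t P Q (k + 1) - (bb S s t P Q (k + 1) - bb S s t P Q k) := by
      abel
    rw [h3]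
    refine (norm_sub_le _ _).trans ?_
    linarith

lemma norm_Z_le (hP : ∀ v, ‖P v‖ ≤ ‖v‖) (hQ : ∀ x, ‖Q (de S t x)‖ ≤ 1)
    (k d : ℕ) (hne : s (k + d) ≠ t (k + d))
    (heq : ∀ m, k ≤ m → m < k + d → s m = t m)
    (hQ' : ∀ j, ‖Q (alphaA S t k j)‖ ≤ 1) (P' : ESp S t →ₗ[ℂ] B) (Z : B)
    (hZ : ∀ j, P' (el S t k j) * Q (alphaA S t k j) = Z) (r : ℝ)
    (hr : ∀ j, ‖P (el S s k j) - P' (el S t k j)‖ ≤ r) : ‖Z‖ ≤ 10 * th k + r := by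
  have h1 := norm_bb_le S s t P Q hP hQ d k hne heq
  have hp : (0:ℝ) < 2 ^ k := by positivity
  have hpc : ((2 ^ k : ℝ) : ℂ) ≠ 0 := by exact_mod_cast hp.ne'
  have h2 : Z = ((2 ^ k : ℝ) : ℂ)⁻¹ • ∑ j, P' (el S t k j) * Q (alphaA S t k j) := by
    simp_rw [hZ]
    rw [Finset.sum_const, Finset.card_univ, ← Nat.cast_smul_eq_nsmul ℂ, smul_smul]
    have : ((Fintype.card (JJ k) : ℕ) : ℂ) = ((2 ^ k : ℝ) : ℂ) := by simp
    rw [this, inv_mul_cancel₀ hpc, one_smul]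
  have h3 : ‖bb S s t P Q k - Z‖ ≤ r := by
    rw [h2, bb, ← smul_sub, ← Finset.sum_sub_distrib]
    simp_rw [← sub_mul]
    rw [norm_smul, norm_inv, Complex.norm_real, Real.norm_of_nonneg hp.le,
      inv_mul_le_iff₀ hp, ← card_JJ]
    refine (norm_sum_le _ _).trans ?_
    refine (Finset.sum_le_card_nsmul _ _ r ?_).trans (by simp)
    intro j _
    refine (norm_mul_le _ _).trans ?_
    have a1 := hr j
    have a2 := hQ' j
    have a3 := norm_nonneg (P (el S s k j) - P' (el S t k j))
    have a4 := norm_nonneg (Q (alphaA S t k j))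
    nlinarith
  have h4 : Z = bb S s t P Q k - (bb S s t P Q k - Z) := by abel
  rw [h4]
  refine (norm_sub_le _ _).trans ?_
  linarith

end core

/-- The family of algebras -/
def AA (S : Sys) (s : ℕ → Bool) : SepCommBanachAlgebra where
  carrier := Tri (ESp S s) (ED S s)

theorem no_universal_aux (B : SepCommBanachAlgebra) :
    ∃ A : SepCommBanachAlgebra,
      ¬ ∃ φ : A.carrier →ₙₐ[ℂ] B.carrier,
        Function.Injective φ ∧
        (∀ a : A.carrier, ‖φ a‖ ≤ ‖a‖) ∧
        (∃ c : ℝ, 0 < c ∧ ∀ a : A.carrier, c * ‖a‖ ≤ ‖φ a‖) := by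
  by_contra hcon
  push Not at hcon
  obtain ⟨S⟩ := exists_sys
  have H : ∀ s : ℕ → Bool, ∃ (P : ESp S s →ₗ[ℂ] B.carrier) (Q : ED S s →ₗ[ℂ] B.carrier)
      (Z : B.carrier), Z ≠ 0 ∧ (∀ v, ‖P v‖ ≤ ‖v‖) ∧ (∀ x, ‖Q (de S s x)‖ ≤ 1) ∧
      (∀ k j, ‖Q (alphaA S s k j)‖ ≤ 1) ∧
      (∀ k j, P (el S s k j) * Q (alphaA S s k j) = Z) := by
    intro s
    obtain ⟨φ, hinj, hφ, -⟩ := hcon (AA S s)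
    let φ' : Tri (ESp S s) (ED S s) →ₙₐ[ℂ] B.carrier := φ
    have hφ' : ∀ a, ‖φ' a‖ ≤ ‖a‖ := hφ
    let φl : Tri (ESp S s) (ED S s) →ₗ[ℂ] B.carrier :=
      { toFun := φ', map_add' := map_add φ', map_smul' := map_smul φ' }
    refine ⟨φl.comp Tri.inX, φl.comp Tri.inY, φ' (Tri.mk 0 0 (1 / 2)), ?_, ?_, ?_, ?_, ?_⟩
    · intro h
      have h0 : φ' (Tri.mk 0 0 (1 / 2)) = φ' 0 := h.trans (map_zero φ').symm
      exact Tri.mk_ne (hinj h0)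
    · intro v
      exact (hφ' _).trans (Tri.norm_inX v).le
    · intro x
      exact (hφ' _).trans ((Tri.norm_inY _).le.trans (norm_de S s x))
    · intro k j
      exact (hφ' _).trans ((Tri.norm_inY _).le.trans (norm_alphaA S s k j))
    · intro k j
      show φ' (Tri.inX _) * φ' (Tri.inY _) = _
      rw [← map_mul, Tri.inX_mul_inY, alphaA_self, if_pos rfl, one_smul]
  choose P Q Z hZ hP hQ hQ' hPQ using H
  have hN : ∀ s, ∃ N : ℕ, 1 / ((N : ℝ) + 1) < ‖Z s‖ := fun s =>
    exists_nat_one_div_lt (norm_pos_iff.mpr (hZ s))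
  choose N hN using hN
  have hK : ∀ n : ℕ, ∃ k : ℕ, 10 * th k < 1 / (2 * ((n : ℝ) + 1)) := by
    intro n
    obtain ⟨k, hk⟩ := exists_pow_lt_of_lt_one (x := 1 / (320 * ((n : ℝ) + 1)))
      (by positivity) (show (4 / 5 : ℝ) < 1 by norm_num)
    refine ⟨k, ?_⟩
    have e : (1 : ℝ) / (2 * ((n : ℝ) + 1)) = 160 * (1 / (320 * ((n : ℝ) + 1))) := by
      field_simp; norm_num
    rw [e, th]; linarith
  choose K hK using hK
  have hD : ∀ s, ∃ i : ℕ, ∀ j, dist (P s (el S s (K (N s)) j))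
      (TopologicalSpace.denseSeq (JJ (K (N s)) → B.carrier) i j) <
        1 / (4 * ((N s : ℝ) + 1)) := by
    intro s
    have hpos : (0:ℝ) < 1 / (4 * ((N s : ℝ) + 1)) := by positivity
    obtain ⟨i, hi⟩ := (TopologicalSpace.denseRange_denseSeq
      (JJ (K (N s)) → B.carrier)).exists_dist_lt (fun j => P s (el S s (K (N s)) j)) hpos
    exact ⟨i, fun j => (dist_le_pi_dist _ _ j).trans_lt hi⟩
  choose D hD using hD
  let code : (ℕ → Bool) → ℕ × Finset ℕ × ℕ := fun s =>
    (N s, (Finset.range (K (N s) + 1)).filter (fun m => s m = true), D s)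
  have hninj : ¬ Function.Injective code := by
    intro hinj
    have : Countable (ℕ → Bool) := hinj.countable
    obtain ⟨f, hf⟩ := exists_injective_nat (ℕ → Bool)
    classical
    refine Function.cantor_injective (fun A : Set ℕ => f (fun n => decide (n ∈ A))) ?_
    intro A A' h
    ext n
    simpa using congrFun (hf h) n
  simp only [Function.Injective, not_forall] at hninj
  obtain ⟨s, t, hst, hne⟩ := hninj
  have hNst : N s = N t := congrArg (fun c => c.1) hst
  have hDst : D s = D t := congrArg (fun c => c.2.2) hst
  have hagree : ∀ m, m ≤ K (N t) → s m = t m := by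
    intro m hm
    have h1 : (Finset.range (K (N s) + 1)).filter (fun m => s m = true) =
      (Finset.range (K (N t) + 1)).filter (fun m => t m = true) := congrArg (fun c => c.2.1) hst
    rw [hNst] at h1
    have h2 := Finset.ext_iff.mp h1 m
    simp only [Finset.mem_filter, Finset.mem_range, Nat.lt_succ_of_le hm, true_and] at h2
    exact Bool.eq_iff_iff.mpr h2
  have hex : ∃ m, s m ≠ t m := Function.ne_iff.mp hne
  classical
  have hf1 := Nat.find_spec hex
  have hf2 : ∀ m, m < Nat.find hex → s m = t m := fun m hm => by
    have := Nat.find_min hex hm; simpa using this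
  have hlt : K (N t) < Nat.find hex := by
    by_contra h
    exact hf1 (hagree _ (not_lt.mp h))
  obtain ⟨d, hd⟩ := Nat.exists_eq_add_of_lt hlt
  rw [hd] at hf1 hf2
  have hs := hD s
  have ht := hD t
  rw [hNst, hDst] at hs
  have hfin := norm_Z_le S s t (P s) (Q t) (hP s) (hQ t) (K (N t)) (d + 1)
    (by simpa [add_assoc] using hf1) (fun m _ hm => hf2 m (by omega)) (hQ' t _) (P t) (Z t)
    (hPQ t _) (1 / (4 * ((N t : ℝ) + 1)) + 1 / (4 * ((N t : ℝ) + 1)))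
    (fun j => by
      rw [← dist_eq_norm]
      refine (dist_triangle_right _ _ _).trans (add_le_add (hs j).le (ht j).le))
  have h1 := hK (N t)
  have h2 := hN t
  have e1 : (1:ℝ) / (4 * ((N t : ℝ) + 1)) + 1 / (4 * ((N t : ℝ) + 1)) =
      1 / (2 * ((N t : ℝ) + 1)) := by field_simp; norm_num
  have e2 : (1:ℝ) / (2 * ((N t : ℝ) + 1)) + 1 / (2 * ((N t : ℝ) + 1)) =
      1 / ((N t : ℝ) + 1) := by field_simp; norm_num
  linarith

end

/-- There is no separable commutative complex Banach algebra `B` such that every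
separable commutative complex Banach algebra `A` admits a contractive homomorphic
embedding into `B`: for every separable commutative Banach algebra `B` there is a
separable commutative Banach algebra `A` such that no injective algebra
homomorphism `φ : A → B` is simultaneously contractive and bounded below. -/
theorem no_universal_separable_commutative_Banach_algebra_contractive
    (B : SepCommBanachAlgebra) :
    ∃ A : SepCommBanachAlgebra,
      ¬ ∃ φ : A.carrier →ₙₐ[ℂ] B.carrier,
        Function.Injective φ ∧
        (∀ a : A.carrier, ‖φ a‖ ≤ ‖a‖) ∧
        (∃ c : ℝ, 0 < c ∧ ∀ a : A.carrier, c * ‖a‖ ≤ ‖φ a‖) := by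
  exact no_universal_aux B
end

section
/- There is no separable commutative complex Banach algebra B such that every separable commutative complex Banach algebra A admits a bounded homomorphic embedding into B; that is, for every separable commutative Banach algebra B there exists a separable commutative Banach algebra A such that no injective bounded algebra homomorphism φ : A → B is bounded below (i.e., there is no c > 0 with c‖a‖ ≤ ‖φ(a)‖ for all a). -/
/-- A commuting sequence in a complete complex normed algebra generates a separable
commutative Banach algebra. -/
theorem exists_sepComm_of_commuting {R : Type} [NormedRing R] [NormedAlgebra ℂ R]
    [CompleteSpace R] (g : ℕ → R) (hg : ∀ i j, g i * g j = g j * g i) :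
    ∃ (A : SepCommBanachAlgebra) (e : A.carrier → R),
      (∀ a b, e (a * b) = e a * e b) ∧ Function.Injective e ∧
      (∀ a, ‖e a‖ = ‖a‖) ∧ ∀ i, ∃ a, e a = g i := by
  let s : Subalgebra ℂ R := Algebra.adjoin ℂ (Set.range g)
  have hs : ∀ x y : s, x * y = y * x := by
    have := Algebra.isMulCommutative_adjoin ℂ (s := Set.range g) (by
      rintro _ ⟨i, rfl⟩ _ ⟨j, rfl⟩; exact hg i j)
    intro x y
    exact mul_comm' x y
  let K : Subalgebra ℂ R := s.topologicalClosure
  have hcomm : ∀ x y : K, x * y = y * x :=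
    (s.toSubmonoid.commMonoidTopologicalClosure hs).mul_comm
  have hclosed : IsClosed (K : Set R) := s.isClosed_topologicalClosure
  have hcompl : CompleteSpace K := hclosed.completeSpace_coe
  have hsep : TopologicalSpace.SeparableSpace K := by
    have h1 : (Submonoid.closure (Set.range g) : Set R).Countable := by
      rw [Submonoid.closure_eq_mrange, MonoidHom.coe_mrange]
      have : Countable (Set.range g) := (Set.countable_range g).to_subtype
      have : Countable (FreeMonoid (Set.range g)) :=
        inferInstanceAs (Countable (List (Set.range g)))
      exact Set.countable_range _
    have h2 : TopologicalSpace.IsSeparable (K : Set R) := by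
      have h3 := (h1.isSeparable.span (R := ℂ)).closure
      have h4 : ((Algebra.adjoin ℂ (Set.range g) : Subalgebra ℂ R) : Set R)
          = (Submodule.span ℂ (Submonoid.closure (Set.range g) : Set R) : Set R) := by
        rw [← Algebra.adjoin_eq_span]; rfl
      rw [← h4] at h3
      exact h3
    exact h2.separableSpace
  let ringK : NormedRing K := inferInstance
  let algK : NormedAlgebra ℂ K := inferInstance
  let cring : NonUnitalNormedCommRing K :=
    { (inferInstance : NonUnitalNormedRing K) with mul_comm := hcomm }
  refine ⟨@SepCommBanachAlgebra.mk K cring (inferInstance : NormedSpace ℂ K)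
    (inferInstance : IsScalarTower ℂ K K) (inferInstance : SMulCommClass ℂ K K) hcompl hsep,
    fun a => a.1, ?_, ?_, ?_, ?_⟩
  · intro a b; rfl
  · exact Subtype.val_injective
  · intro a; rfl
  · intro i
    exact ⟨⟨g i, s.le_topologicalClosure (Algebra.subset_adjoin ⟨i, rfl⟩)⟩, rfl⟩

/-- The index set: monomials `x^m`, `y_k`, `w_m`, `g_k`. -/
inductive BIdx : Type
  | a (m : ℕ)
  | y (k : ℕ)
  | w (m : ℕ)
  | g (k : ℕ)

instance : TopologicalSpace BIdx := ⊥
instance : DiscreteTopology BIdx := ⟨rfl⟩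

/-- The space of bounded functions on the index set. -/
abbrev BSp : Type := BoundedContinuousFunction BIdx ℂ

/-- Weighted composition operator. -/
noncomputable def wop (c : BIdx → ℝ) (σ : BIdx → BIdx) (C : ℝ) (h : ∀ p, |c p| ≤ C) :
    BSp →L[ℂ] BSp :=
  LinearMap.mkContinuous
    { toFun := fun f => BoundedContinuousFunction.ofNormedAddCommGroupDiscrete
        (fun p => (c p : ℂ) * f (σ p)) (C * ‖f‖) (by
          intro p
          rw [norm_mul, Complex.norm_real]
          exact mul_le_mul (h p) (f.norm_coe_le_norm _) (norm_nonneg _)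
            ((abs_nonneg _).trans (h p)))
      map_add' := by
        intro f g; ext p
        simp [mul_add]
      map_smul' := by
        intro r f; ext p
        simp; ring } C (by
    intro f
    refine (BoundedContinuousFunction.norm_le
      (mul_nonneg ((abs_nonneg _).trans (h (BIdx.a 0))) (norm_nonneg _))).2 ?_
    intro p
    simp only [LinearMap.coe_mk, AddHom.coe_mk,
      BoundedContinuousFunction.coe_ofNormedAddCommGroupDiscrete]
    rw [norm_mul, Complex.norm_real]
    exact mul_le_mul (h p) (f.norm_coe_le_norm _) (norm_nonneg _)
      ((abs_nonneg _).trans (h p)))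

theorem wop_apply (c : BIdx → ℝ) (σ : BIdx → BIdx) (C : ℝ) (h : ∀ p, |c p| ≤ C)
    (f : BSp) (p : BIdx) : wop c σ C h f p = (c p : ℂ) * f (σ p) := rfl

theorem wop_norm (c : BIdx → ℝ) (σ : BIdx → BIdx) (C : ℝ) (h : ∀ p, |c p| ≤ C) :
    ‖wop c σ C h‖ ≤ C :=
  LinearMap.mkContinuous_norm_le _ ((abs_nonneg _).trans (h (BIdx.a 0))) _

/-- Coefficients of the operator `x`. -/
noncomputable def cX (N : ℕ → ℝ) : BIdx → ℝ
  | .a _ => 1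
  | .y 0 => 0
  | .y (k + 1) => N k / N (k + 1)
  | .w m => N m / N (m + 1)
  | .g 0 => 0
  | .g (_ + 1) => 1

/-- Index map of the operator `x`. -/
def sX : BIdx → BIdx
  | .a m => .a (m + 1)
  | .y k => .y (k - 1)
  | .w m => .w (m + 1)
  | .g k => .g (k - 1)

/-- Coefficients of the operator `y_n`. -/
noncomputable def cY (N : ℕ → ℝ) (n : ℕ) : BIdx → ℝ
  | .a m => if m ≤ n then N (n - m) else 0
  | .y _ => 0
  | .w m => if m ≤ n then N m else 0
  | .g _ => 0

/-- Index map of the operator `y_n`. -/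
def sY (n : ℕ) : BIdx → BIdx
  | .a m => .y (n - m)
  | .y k => .y k
  | .w m => .g (n - m)
  | .g k => .g k

/-- Coefficients of the operator `w_j`. -/
noncomputable def cW (N : ℕ → ℝ) (j : ℕ) : BIdx → ℝ
  | .a l => 1 / N (l + j)
  | .y k => if j ≤ k then 1 / N k else 0
  | .w _ => 0
  | .g _ => 0

/-- Index map of the operator `w_j`. -/
def sW (j : ℕ) : BIdx → BIdx
  | .a l => .w (l + j)
  | .y k => .g (k - j)
  | .w k => .w k
  | .g k => .g k

theorem cX_le {N : ℕ → ℝ} (h1 : ∀ n, 1 ≤ N n) (hm : Monotone N) (p : BIdx) :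
    |cX N p| ≤ 1 := by
  have h0 : ∀ n, 0 < N n := fun n => zero_lt_one.trans_le (h1 n)
  have key : ∀ k, |N k / N (k + 1)| ≤ 1 := by
    intro k
    rw [abs_of_pos (div_pos (h0 _) (h0 _)), div_le_one (h0 _)]
    exact hm (Nat.le_succ k)
  rcases p with m | k | m | k
  · simp [cX]
  · cases k with
    | zero => simp [cX]
    | succ k => exact key k
  · exact key m
  · cases k <;> simp [cX]

theorem cY_le {N : ℕ → ℝ} (h1 : ∀ n, 1 ≤ N n) (hm : Monotone N) (n : ℕ) (p : BIdx) :
    |cY N n p| ≤ N n := by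
  have h0 : ∀ n, 0 < N n := fun n => zero_lt_one.trans_le (h1 n)
  rcases p with m | k | m | k
  · simp only [cY]
    split_ifs with h
    · rw [abs_of_pos (h0 _)]; exact hm (Nat.sub_le _ _)
    · simpa using (h0 n).le
  · simpa [cY] using (h0 n).le
  · simp only [cY]
    split_ifs with h
    · rw [abs_of_pos (h0 _)]; exact hm h
    · simpa using (h0 n).le
  · simpa [cY] using (h0 n).le

theorem cW_le {N : ℕ → ℝ} (h1 : ∀ n, 1 ≤ N n) (hm : Monotone N) (j : ℕ) (p : BIdx) :
    |cW N j p| ≤ 1 / N j := by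
  have h0 : ∀ n, 0 < N n := fun n => zero_lt_one.trans_le (h1 n)
  have hp : 0 ≤ 1 / N j := (div_pos one_pos (h0 j)).le
  rcases p with m | k | m | k
  · simp only [cW]
    rw [abs_of_pos (div_pos one_pos (h0 _))]
    exact one_div_le_one_div_of_le (h0 _) (hm (Nat.le_add_left _ _))
  · simp only [cW]
    split_ifs with h
    · rw [abs_of_pos (div_pos one_pos (h0 _))]
      exact one_div_le_one_div_of_le (h0 _) (hm h)
    · simpa using hp
  · simpa [cW] using hp
  · simpa [cW] using hp

/-- The algebra attached to a weight `N`. -/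
theorem exists_weighted_algebra (N : ℕ → ℝ) (h1 : ∀ n, 1 ≤ N n) (hm : Monotone N) :
    ∃ (A : SepCommBanachAlgebra) (x : A.carrier) (y w : ℕ → A.carrier),
      ‖x‖ ≤ 1 ∧ (∀ n, ‖y n‖ ≤ N n) ∧ (∀ n, ‖w n‖ ≤ 1 / N n) ∧
      (∀ n, x * y (n + 1) = y n) ∧ (∀ n, x * w n = w (n + 1)) ∧ 1 ≤ ‖y 0 * w 0‖ := by
  have h0 : ∀ n, (N n : ℂ) ≠ 0 := fun n => by
    exact_mod_cast (zero_lt_one.trans_le (h1 n)).ne'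
  let X : BSp →L[ℂ] BSp := wop (cX N) sX 1 (cX_le h1 hm)
  let Y : ℕ → BSp →L[ℂ] BSp := fun n => wop (cY N n) (sY n) (N n) (cY_le h1 hm n)
  let W : ℕ → BSp →L[ℂ] BSp := fun n => wop (cW N n) (sW n) (1 / N n) (cW_le h1 hm n)
  have hXY : ∀ n, X * Y (n + 1) = Y n := by
    intro n; ext f p
    simp only [mul_apply_eq_comp, X, Y, wop_apply]
    rcases p with m | k | m | k
    · simp [cX, sX, cY, sY]
    · simp [cX, sX, cY, sY]
    · simp only [cX, sX, cY, sY, Nat.add_le_add_iff_right, Nat.add_sub_add_right]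
      split_ifs
      · push_cast
        have := h0 (m + 1)
        field_simp
      · simp
    · simp [cX, sX, cY, sY]
  have hYX : ∀ n, Y (n + 1) * X = Y n := by
    intro n; ext f p
    simp only [mul_apply_eq_comp, X, Y, wop_apply]
    rcases p with m | k | m | k
    · simp only [cX, sX, cY, sY]
      rcases lt_trichotomy m (n + 1) with h | h | h
      · obtain ⟨d, rfl⟩ : ∃ d, n = m + d := ⟨n - m, by omega⟩
        have e1 : m + d + 1 - m = d + 1 := by omega
        have e2 : m + d - m = d := by omega
        rw [e1, e2, if_pos (by omega), if_pos (by omega)]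
        simp only [cX, Nat.add_sub_cancel]
        push_cast
        have := h0 (d + 1)
        field_simp
      · subst h; simp [cX]
      · rw [if_neg (by omega), if_neg (by omega)]; simp
    · simp [cY]
    · simp only [cX, sX, cY, sY]
      rcases lt_trichotomy m (n + 1) with h | h | h
      · obtain ⟨d, rfl⟩ : ∃ d, n = m + d := ⟨n - m, by omega⟩
        have e1 : m + d + 1 - m = d + 1 := by omega
        have e2 : m + d - m = d := by omega
        rw [e1, e2, if_pos (by omega), if_pos (by omega)]
        simp [cX]
      · subst h; simp [cX]
      · rw [if_neg (by omega), if_neg (by omega)]; simp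
    · simp [cY]
  have hXY0 : X * Y 0 = 0 := by
    ext f p
    simp only [mul_apply_eq_comp, X, Y, wop_apply]
    rcases p with m | k | m | k <;> simp [cX, sX, cY, sY]
  have hYX0 : Y 0 * X = 0 := by
    ext f p
    simp only [mul_apply_eq_comp, X, Y, wop_apply]
    rcases p with m | k | m | k <;> simp [cX, sX, cY, sY]
  have hXW : ∀ n, X * W n = W (n + 1) := by
    intro n; ext f p
    simp only [mul_apply_eq_comp, X, W, wop_apply]
    rcases p with m | k | m | k
    · simp only [cX, sX, cW, sW]
      rw [show m + 1 + n = m + (n + 1) by omega]; simp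
    · cases k with
      | zero => simp [cX, sX, cW, sW]
      | succ k =>
        simp only [cX, sX, cW, sW, Nat.add_le_add_iff_right, Nat.add_sub_add_right,
          Nat.add_sub_cancel]
        split_ifs
        · push_cast
          have := h0 (k + 1)
          have := h0 k
          field_simp
        · simp
    · simp [cX, sX, cW, sW]
    · simp [cX, sX, cW, sW]
  have hWX : W 0 * X = X * W 0 := by
    rw [hXW]
    ext f p
    simp only [mul_apply_eq_comp, X, W, wop_apply]
    rcases p with m | k | m | k
    · simp only [cX, sX, cW, sW, Nat.add_zero, zero_add]
      push_cast
      have := h0 (m + 1)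
      have := h0 m
      field_simp
    · cases k <;> simp [cX, sX, cW, sW]
    · simp [cX, sX, cW, sW]
    · simp [cX, sX, cW, sW]
  have hYW : ∀ n, Y n * W 0 = W 0 * Y n := by
    intro n; ext f p
    simp only [mul_apply_eq_comp, Y, W, wop_apply]
    rcases p with m | k | m | k
    · simp only [cY, sY, cW, sW, Nat.add_zero, Nat.sub_zero, Nat.zero_le, if_true]
      split_ifs
      · push_cast
        have := h0 (n - m)
        have := h0 m
        field_simp
      · simp
    · simp [cY, sY, cW, sW]
    · simp [cY, sY, cW, sW]
    · simp [cY, sY, cW, sW]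
  have hYY : ∀ n m, Y n * Y m = 0 := by
    intro n m; ext f p
    simp only [mul_apply_eq_comp, Y, wop_apply]
    rcases p with m | k | m | k <;> simp [cY, sY]
  have hXYc : ∀ n, X * Y n = Y n * X := by
    intro n
    cases n with
    | zero => rw [hXY0, hYX0]
    | succ n => rw [hXY, hYX]
  let G : ℕ → BSp →L[ℂ] BSp := fun i => match i with
    | 0 => X
    | 1 => W 0
    | n + 2 => Y n
  have hG : ∀ i j, G i * G j = G j * G i := by
    intro i j
    rcases i with _ | _ | i <;> rcases j with _ | _ | j <;> simp only [G]
    · exact hWX.symm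
    · exact hXYc j
    · exact hWX
    · exact (hYW j).symm
    · exact (hXYc i).symm
    · exact hYW i
    · rw [hYY, hYY]
  obtain ⟨A, e, emul, einj, enorm, hr⟩ := exists_sepComm_of_commuting G hG
  obtain ⟨x, hx⟩ := hr 0
  obtain ⟨w0, hw0⟩ := hr 1
  choose y hy using fun n => hr (n + 2)
  have hx : e x = X := hx
  have hw0 : e w0 = W 0 := hw0
  have hy : ∀ n, e (y n) = Y n := hy
  let w : ℕ → A.carrier := fun n => Nat.rec w0 (fun _ v => x * v) n
  have hws : ∀ n, x * w n = w (n + 1) := fun n => rfl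
  have hw : ∀ n, e (w n) = W n := by
    intro n
    induction n with
    | zero => exact hw0
    | succ n ih => rw [← hws, emul, ih, hx, hXW]
  refine ⟨A, x, y, w, ?_, ?_, ?_, ?_, hws, ?_⟩
  · rw [← enorm, hx]; exact wop_norm _ _ _ _
  · intro n; rw [← enorm, hy]; exact wop_norm _ _ _ _
  · intro n; rw [← enorm, hw]; exact wop_norm _ _ _ _
  · intro n
    apply einj
    rw [emul, hx, hy, hy, hXY]
  · rw [← enorm, emul, hy, hw]
    let f : BSp := BoundedContinuousFunction.const BIdx 1
    have hf : ‖f‖ ≤ 1 := by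
      refine (BoundedContinuousFunction.norm_le zero_le_one).2 ?_
      intro p; simp [f]
    have hv : (Y 0 * W 0) f (.a 0) = 1 := by
      simp only [mul_apply_eq_comp, Y, W, wop_apply]
      have := h0 0
      simp [cY, sY, cW, sW, f, this]
    have h2 := ((Y 0 * W 0) f).norm_coe_le_norm (.a 0)
    rw [hv, norm_one] at h2
    exact h2.trans (((Y 0 * W 0).le_opNorm f).trans
      (mul_le_of_le_one_right (norm_nonneg _) hf))

open Classical in
/-- The exponent function attached to a set `S`. -/
noncomputable def hexp (S : Set ℕ) (m : ℕ) : ℕ :=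
  (Finset.range (2 * m + 1)).sup (fun k => if ∃ i, i ∉ S ∧ k = 4 ^ i then k else 0)

theorem hexp_mono (S : Set ℕ) : Monotone (hexp S) := by
  intro a b hab
  apply Finset.sup_mono
  intro k hk
  simp only [Finset.mem_range] at hk ⊢
  omega

theorem hexp_le (S : Set ℕ) (i : ℕ) (hi : i ∈ S) : 3 * hexp S (4 ^ i) ≤ 4 ^ i := by
  have : hexp S (4 ^ i) ≤ 4 ^ i / 3 := by
    apply Finset.sup_le
    intro k hk
    split_ifs with h
    · obtain ⟨j, hj, rfl⟩ := h
      simp only [Finset.mem_range] at hk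
      have hji : j ≠ i := by rintro rfl; exact hj hi
      have hlt : j < i := by
        by_contra hcon
        have h1 : i + 1 ≤ j := by omega
        have h2 : 4 ^ (i + 1) ≤ 4 ^ j := Nat.pow_le_pow_right (by norm_num) h1
        have h3 : 0 < 4 ^ i := by positivity
        rw [pow_succ] at h2
        omega
      have h2 : 4 ^ (j + 1) ≤ 4 ^ i := Nat.pow_le_pow_right (by norm_num) hlt
      rw [pow_succ] at h2
      omega
    · exact Nat.zero_le _
  omega

theorem le_hexp (S : Set ℕ) (i m : ℕ) (hi : i ∉ S) (hm : 4 ^ i ≤ 2 * m) :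
    4 ^ i ≤ hexp S m := by
  classical
  have h := Finset.le_sup (f := fun k => if ∃ i, i ∉ S ∧ k = 4 ^ i then k else 0)
    (s := Finset.range (2 * m + 1)) (b := 4 ^ i) (by simp only [Finset.mem_range]; omega)
  have h2 : ∃ j, j ∉ S ∧ 4 ^ i = 4 ^ j := ⟨i, hi, rfl⟩
  simp only [h2, if_true] at h
  unfold hexp
  convert h

/-- The key estimate. -/
theorem key_estimate {B : Type} [NonUnitalNormedCommRing B] [NormedSpace ℂ B]
    [IsScalarTower ℂ B B] [SMulCommClass ℂ B B] (s t : B) (y w : ℕ → B) (C : ℝ) (n : ℕ)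
    (hst : ‖s - t‖ ≤ 1 / 64) (hy : ∀ n, s * y (n + 1) = y n) (hw : ∀ n, t * w n = w (n + 1))
    (hyn : ‖y n‖ ≤ C * 2 ^ n) (hw1 : ∀ m, ‖w m‖ ≤ C)
    (hw2 : ∀ m, n ≤ 2 * m → ‖w m‖ ≤ C * (1 / 8) ^ n) :
    ‖y 0 * w 0‖ ≤ C ^ 2 * (1 / 2) ^ n := by
  have hC : 0 ≤ C := (norm_nonneg _).trans (hw1 0)
  let L : B → (B →L[ℂ] B) := fun b => ContinuousLinearMap.mul ℂ B b
  have hL : ∀ a b, L a b = a * b := fun a b => rfl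
  have hws : ∀ m, (L t ^ m) (w 0) = w m := by
    intro m
    induction m with
    | zero => simp
    | succ m ih => rw [pow_succ', mul_apply_eq_comp, ih, hL, hw]
  have hcomm : Commute (L t) (L (s - t)) := by
    ext b
    simp only [mul_apply_eq_comp, hL]
    rw [mul_left_comm]
  have hsum : L s = L t + L (s - t) := by
    ext b
    simp only [ContinuousLinearMap.add_apply, hL]
    rw [← add_mul]; congr 1; abel
  have hd : ‖L (s - t)‖ ≤ 1 / 64 := by
    refine le_trans ?_ hst
    refine ContinuousLinearMap.opNorm_le_bound _ (norm_nonneg _) ?_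
    intro b; exact norm_mul_le _ _
  have hdp : ∀ k v, ‖(L (s - t) ^ k) v‖ ≤ (1 / 64) ^ k * ‖v‖ := by
    intro k v
    induction k with
    | zero => simp
    | succ k ih =>
      rw [pow_succ', mul_apply_eq_comp]
      calc ‖L (s - t) ((L (s - t) ^ k) v)‖ ≤ ‖L (s - t)‖ * ‖(L (s - t) ^ k) v‖ :=
            ContinuousLinearMap.le_opNorm _ _
        _ ≤ (1 / 64) * ((1 / 64) ^ k * ‖v‖) :=
            mul_le_mul hd ih (norm_nonneg _) (by norm_num)
        _ = _ := by ring
  have hterm : ∀ m ∈ Finset.range (n + 1),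
      ‖(L t ^ m * L (s - t) ^ (n - m) * ((n.choose m : ℕ) : B →L[ℂ] B)) (w 0)‖
        ≤ (n.choose m : ℝ) * (C * (1 / 8) ^ n) := by
    intro m hm
    have hmn : m ≤ n := by simpa [Nat.lt_succ_iff] using hm
    have e1 : (L t ^ m * L (s - t) ^ (n - m) * ((n.choose m : ℕ) : B →L[ℂ] B)) (w 0)
        = (n.choose m : ℕ) • ((L (s - t) ^ (n - m)) (w m)) := by
      rw [(hcomm.pow_pow m (n - m)).eq, ← nsmul_eq_mul', ContinuousLinearMap.smul_apply,
        mul_apply_eq_comp, hws]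
    rw [e1]
    refine (norm_nsmul_le).trans ?_
    refine mul_le_mul_of_nonneg_left ?_ (Nat.cast_nonneg _)
    refine (hdp _ _).trans ?_
    by_cases h : n ≤ 2 * m
    · calc (1 / 64 : ℝ) ^ (n - m) * ‖w m‖ ≤ 1 * (C * (1 / 8) ^ n) :=
            mul_le_mul (pow_le_one₀ (by norm_num) (by norm_num)) (hw2 m h) (norm_nonneg _)
              zero_le_one
        _ = _ := one_mul _
    · have h3 : (1 / 64 : ℝ) ^ (n - m) ≤ (1 / 8) ^ n := by
        rw [show (1 / 64 : ℝ) = (1 / 8) ^ 2 by norm_num, ← pow_mul]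
        exact pow_le_pow_of_le_one (by norm_num) (by norm_num) (by omega)
      calc (1 / 64 : ℝ) ^ (n - m) * ‖w m‖ ≤ (1 / 8) ^ n * C :=
            mul_le_mul h3 (hw1 m) (norm_nonneg _) (by positivity)
        _ = _ := mul_comm _ _
  have hsw : ‖(L s ^ n) (w 0)‖ ≤ C * (1 / 4) ^ n := by
    rw [hsum, hcomm.add_pow, ContinuousLinearMap.sum_apply]
    refine (norm_sum_le_of_le _ hterm).trans ?_
    rw [← Finset.sum_mul]
    have : ∑ m ∈ Finset.range (n + 1), (n.choose m : ℝ) = 2 ^ n := by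
      exact_mod_cast Nat.sum_range_choose n
    rw [this, show (1 / 4 : ℝ) = 2 * (1 / 8) by norm_num, mul_pow]
    exact le_of_eq (by ring)
  have hyw : ∀ k, y 0 * w 0 = y k * (L s ^ k) (w 0) := by
    intro k
    induction k with
    | zero => simp
    | succ k ih =>
      rw [ih, pow_succ', mul_apply_eq_comp, hL, ← hy k, mul_left_comm (y (k + 1)), mul_assoc]
  rw [hyw n]
  calc ‖y n * (L s ^ n) (w 0)‖ ≤ ‖y n‖ * ‖(L s ^ n) (w 0)‖ := norm_mul_le _ _
    _ ≤ (C * 2 ^ n) * (C * (1 / 4) ^ n) :=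
        mul_le_mul hyn hsw (norm_nonneg _) (by positivity)
    _ = C ^ 2 * (1 / 2) ^ n := by
        rw [show (1 / 2 : ℝ) = 2 * (1 / 4) by norm_num, mul_pow]; ring

/-- Data extracted from an embedding of the algebra attached to `S`. -/
def HasData (B : SepCommBanachAlgebra) (S : Set ℕ) (q : ℕ) (x z : B.carrier) : Prop :=
  ∃ y w : ℕ → B.carrier, y 0 = z ∧
    (∀ n, x * y (n + 1) = y n) ∧ (∀ n, x * w n = w (n + 1)) ∧
    (∀ n, ‖y n‖ ≤ q * 8 ^ hexp S n) ∧ (∀ n, ‖w n‖ ≤ q * (1 / 8) ^ hexp S n) ∧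
    1 ≤ q * ‖y 0 * w 0‖

theorem no_close_data (B : SepCommBanachAlgebra) (S T : Set ℕ) (q : ℕ)
    (x z x' z' : B.carrier)
    (hS : HasData B S q x z) (hT : HasData B T q x' z')
    (hx : ‖x - x'‖ ≤ 1 / 64) (hz : q ^ 2 * ‖z - z'‖ ≤ 1 / 2)
    (hinf : ∀ n, ∃ i, n ≤ i ∧ i ∈ S ∧ i ∉ T) : False := by
  obtain ⟨y, w, rfl, hy, -, hyn, -, -⟩ := hS
  obtain ⟨y', w', rfl, -, hw', -, hwn', hlow⟩ := hT
  have hq0 : (0 : ℝ) ≤ q := Nat.cast_nonneg _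
  have hw1 : ∀ m, ‖w' m‖ ≤ q := fun m => (hwn' m).trans
    (mul_le_of_le_one_right hq0 (pow_le_one₀ (by norm_num) (by norm_num)))
  have hdiff : (q : ℝ) * ‖y' 0 * w' 0‖ ≤ q * ‖y 0 * w' 0‖ + 1 / 2 := by
    have e : y' 0 * w' 0 = y 0 * w' 0 - (y 0 - y' 0) * w' 0 := by
      rw [sub_mul]; abel
    have h1 : ‖y' 0 * w' 0‖ ≤ ‖y 0 * w' 0‖ + ‖y 0 - y' 0‖ * q := by
      rw [e]
      refine (norm_sub_le _ _).trans (add_le_add le_rfl ?_)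
      exact (norm_mul_le _ _).trans (mul_le_mul_of_nonneg_left (hw1 0) (norm_nonneg _))
    calc (q : ℝ) * ‖y' 0 * w' 0‖ ≤ q * (‖y 0 * w' 0‖ + ‖y 0 - y' 0‖ * q) :=
          mul_le_mul_of_nonneg_left h1 hq0
      _ = q * ‖y 0 * w' 0‖ + q ^ 2 * ‖y 0 - y' 0‖ := by ring
      _ ≤ _ := by linarith
  have hbig : (1 / 2 : ℝ) ≤ q * ‖y 0 * w' 0‖ := by linarith
  have hlim : Filter.Tendsto (fun n : ℕ => (q : ℝ) * (q ^ 2 * (1 / 2 : ℝ) ^ n)) Filter.atTop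
      (nhds 0) := by
    have := tendsto_pow_atTop_nhds_zero_of_lt_one (r := (1 / 2 : ℝ)) (by norm_num) (by norm_num)
    simpa using (this.const_mul ((q : ℝ) ^ 2)).const_mul (q : ℝ)
  obtain ⟨n0, hn0⟩ := Filter.eventually_atTop.1
    (hlim.eventually (gt_mem_nhds (show (0 : ℝ) < 1 / 2 by norm_num)))
  obtain ⟨i, hi, hiS, hiT⟩ := hinf n0
  have hn : n0 ≤ 4 ^ i := hi.trans (Nat.lt_pow_self (by norm_num)).le
  have hest := key_estimate x x' y w' q (4 ^ i) hx hy hw' (by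
      refine (hyn _).trans (mul_le_mul_of_nonneg_left ?_ hq0)
      rw [show (8 : ℝ) = 2 ^ 3 by norm_num, ← pow_mul]
      exact pow_le_pow_right₀ (by norm_num) (hexp_le S i hiS)) hw1 (by
      intro m hm
      refine (hwn' _).trans (mul_le_mul_of_nonneg_left ?_ hq0)
      exact pow_le_pow_of_le_one (by norm_num) (by norm_num) (le_hexp T i m hiT hm))
  have := hn0 _ hn
  have h2 := mul_le_mul_of_nonneg_left hest hq0
  linarith

/-- There is no separable commutative complex Banach algebra `B` such that every
separable commutative complex Banach algebra `A` admits a bounded homomorphic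
embedding into `B`: for every separable commutative Banach algebra `B` there is a
separable commutative Banach algebra `A` such that no injective bounded algebra
homomorphism `φ : A → B` is bounded below. -/
theorem no_universal_separable_commutative_Banach_algebra_bounded
    (B : SepCommBanachAlgebra) :
    ∃ A : SepCommBanachAlgebra,
      ¬ ∃ φ : A.carrier →ₙₐ[ℂ] B.carrier,
        Function.Injective φ ∧
        (∃ C : ℝ, ∀ a : A.carrier, ‖φ a‖ ≤ C * ‖a‖) ∧
        (∃ c : ℝ, 0 < c ∧ ∀ a : A.carrier, c * ‖a‖ ≤ ‖φ a‖) := by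
  by_contra hcon
  push Not at hcon
  let SS : Set ℕ → Set ℕ := fun α => {i | i.unpair.1 ∈ α}
  have hdata : ∀ α : Set ℕ, ∃ (q : ℕ) (x z : B.carrier), HasData B (SS α) q x z := by
    intro α
    obtain ⟨A, x, y, w, -, hy, hw, hxy, hxw, hlow⟩ :=
      exists_weighted_algebra (fun n => (8 : ℝ) ^ hexp (SS α) n)
        (fun n => one_le_pow₀ (by norm_num))
        (fun a b hab => pow_le_pow_right₀ (by norm_num) (hexp_mono _ hab))
    obtain ⟨φ, -, ⟨C, hC⟩, c, hc, hcl⟩ := hcon A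
    obtain ⟨q, hq⟩ := exists_nat_ge (max C (1 / c))
    have hqC : C ≤ q := (le_max_left _ _).trans hq
    have hqc : 1 / c ≤ q := (le_max_right _ _).trans hq
    have hqC' : ∀ a, ‖φ a‖ ≤ q * ‖a‖ := fun a =>
      (hC a).trans (mul_le_mul_of_nonneg_right hqC (norm_nonneg _))
    have hq0 : (0 : ℝ) ≤ q := Nat.cast_nonneg _
    refine ⟨q, φ x, φ (y 0), fun n => φ (y n), fun n => φ (w n), rfl, ?_, ?_, ?_, ?_, ?_⟩
    · intro n; rw [← map_mul, hxy]
    · intro n; rw [← map_mul, hxw]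
    · intro n; exact (hqC' _).trans (mul_le_mul_of_nonneg_left (hy n) hq0)
    · intro n
      refine (hqC' _).trans (mul_le_mul_of_nonneg_left ((hw n).trans (le_of_eq ?_)) hq0)
      rw [one_div_pow]
    · rw [← map_mul]
      have h1 : c ≤ ‖φ (y 0 * w 0)‖ :=
        (le_mul_of_one_le_right hc.le hlow).trans (hcl _)
      calc (1 : ℝ) = 1 / c * c := by field_simp
        _ ≤ q * ‖φ (y 0 * w 0)‖ := mul_le_mul hqc h1 hc.le hq0
  choose q x z hd using hdata
  let ε : ℕ → ℝ := fun q => min (1 / 64) (1 / 2 / ((q : ℝ) ^ 2 + 1))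
  have hε : ∀ q, 0 < ε q := fun q => lt_min (by norm_num) (by positivity)
  have : Nonempty B.carrier := ⟨0⟩
  let u := TopologicalSpace.denseSeq (B.carrier × B.carrier)
  have hu : ∀ α, ∃ k, dist (x α, z α) (u k) < ε (q α) / 2 := fun α =>
    (TopologicalSpace.denseRange_denseSeq (B.carrier × B.carrier)).exists_dist_lt
      (x α, z α) (half_pos (hε (q α)))
  choose k hk using hu
  have hni := Function.cantor_injective (fun α : Set ℕ => Nat.pair (q α) (k α))
  apply hni
  have hclose : ∀ α β, q α = q β → k α = k β → ¬ ∃ j, j ∈ α ∧ j ∉ β := by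
    rintro α β hq hkk ⟨j, hj, hj'⟩
    have h1 : dist (x α, z α) (x β, z β) < ε (q α) := by
      have a1 := hk α
      have a2 := hk β
      rw [← hq, ← hkk] at a2
      have := dist_triangle_right (x α, z α) (x β, z β) (u (k α))
      linarith
    rw [Prod.dist_eq, max_lt_iff, dist_eq_norm, dist_eq_norm] at h1
    refine no_close_data B (SS α) (SS β) (q α) (x α) (z α) (x β) (z β) (hd α)
      (by rw [hq]; exact hd β) (h1.1.le.trans (min_le_left _ _)) ?_ ?_
    · have h2 : ‖z α - z β‖ ≤ 1 / 2 / ((q α : ℝ) ^ 2 + 1) := h1.2.le.trans (min_le_right _ _)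
      rw [le_div_iff₀ (by positivity)] at h2
      have := norm_nonneg (z α - z β)
      nlinarith
    · intro n
      refine ⟨Nat.pair j n, Nat.right_le_pair j n, ?_, ?_⟩
      · simpa [SS] using hj
      · simpa [SS] using hj'
  intro α β h
  obtain ⟨h1, h2⟩ := Nat.pair_eq_pair.1 h
  apply Set.Subset.antisymm
  · intro j hj
    by_contra hj'
    exact hclose α β h1 h2 ⟨j, hj, hj'⟩
  · intro j hj
    by_contra hj'
    exact hclose β α h1.symm h2.symm ⟨j, hj, hj'⟩
end
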